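/- arXiv:1812.11370 — 10 statements merged into one kernel-verified Lean document; each statement's English description precedes it below -/
import Mathlib

section
/- Let a ∈ ℤ, M ≥ 0, and let f : ℕ_{a+1} → ℝ satisfy |f(k)| ≤ M for all k ∈ ℕ_{a+1}. Then for every real s with 0 < s < 2 the series F(s) = ∑_{k=1}^∞ (1-s)^{k-1} f(k+a) converges, and F(s) tends to f(a+1) as s tends to 1 (with s ranging over real numbers in (0,2), s ≠ 1). -/
/-!
The transform is a power series in `1 - s` with bounded coefficients. It is dominated by a geometric
series, uniformly for `‖1 - s‖ ≤ r < 1`, so it is continuous on `‖1 - s‖ < 1`; at the center `s = 1`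
only the constant coefficient `f (a + 1)` survives.
-/

open Filter Metric Topology

section PowerSeries

theorem tsum_zero_pow_smul {R V : Type*} [Semiring R] [AddCommMonoid V] [TopologicalSpace V]
    [Module R V] (c : ℕ → V) : ∑' k : ℕ, (0 : R) ^ k • c k = c 0 := by
  rw [tsum_eq_single 0 fun k hk => by rw [zero_pow hk, zero_smul], pow_zero, one_smul]

variable {𝕜 E : Type*} [SeminormedRing 𝕜] [NormOneClass 𝕜] [NormedAddCommGroup E] [Module 𝕜 E]
  [IsBoundedSMul 𝕜 E]

theorem norm_pow_smul_le {x : 𝕜} {v : E} {r M : ℝ} (hx : ‖x‖ ≤ r) (hv : ‖v‖ ≤ M) (k : ℕ) :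
    ‖x ^ k • v‖ ≤ r ^ k * M := by
  have hr : 0 ≤ r := (norm_nonneg x).trans hx
  calc ‖x ^ k • v‖ ≤ ‖x ^ k‖ * ‖v‖ := norm_smul_le _ _
    _ ≤ ‖x‖ ^ k * ‖v‖ := by gcongr; exact norm_pow_le x k
    _ ≤ r ^ k * M := by gcongr

variable [CompleteSpace E] {c : ℕ → E} {M : ℝ}

theorem summable_pow_smul_of_norm_le (hc : ∀ k, ‖c k‖ ≤ M) {x : 𝕜} (hx : ‖x‖ < 1) :
    Summable fun k : ℕ => x ^ k • c k :=
  .of_norm_bounded ((summable_geometric_of_lt_one (norm_nonneg x) hx).mul_right M)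
    fun k => norm_pow_smul_le le_rfl (hc k) k

theorem continuousOn_tsum_pow_smul_of_norm_le (hc : ∀ k, ‖c k‖ ≤ M) :
    ContinuousOn (fun x : 𝕜 => ∑' k : ℕ, x ^ k • c k) (ball 0 1) := by
  intro x hx
  obtain ⟨r, hxr, hr⟩ := exists_between (mem_ball_zero_iff.mp hx)
  have hgeom : Summable fun k : ℕ => r ^ k * M :=
    (summable_geometric_of_lt_one ((norm_nonneg x).trans hxr.le) hr).mul_right M
  have hcont : ContinuousOn (fun y : 𝕜 => ∑' k : ℕ, y ^ k • c k) (closedBall 0 r) :=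
    continuousOn_tsum (fun k => by fun_prop) hgeom fun k y hy =>
      norm_pow_smul_le (mem_closedBall_zero_iff.mp hy) (hc k) k
  have hnhds : closedBall (0 : 𝕜) r ∈ 𝓝 x :=
    closedBall_mem_nhds_of_mem (mem_ball_zero_iff.mpr hxr)
  exact (hcont.continuousAt hnhds).continuousWithinAt

end PowerSeries

section NablaLaplace

/-- The nabla Laplace transform `𝒩_a{f}(s) = ∑_{k ≥ 1} (1 - s)^(k - 1) f(k + a)`, with the summation
index shifted to start at `0`. A function on `ℕ_{a+1}` is encoded as a function on `ℤ`, of which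
only the values on `ℕ_{a+1}` enter. The sum has the junk value `0` where it is not summable. -/
noncomputable def nablaLaplace {R V : Type*} [Ring R] [AddCommMonoid V] [TopologicalSpace V]
    [Module R V] (a : ℤ) (f : ℤ → V) (s : R) : V :=
  ∑' k : ℕ, (1 - s) ^ k • f (a + 1 + k)

theorem nablaLaplace_one {R V : Type*} [Ring R] [AddCommMonoid V] [TopologicalSpace V] [Module R V]
    (a : ℤ) (f : ℤ → V) : nablaLaplace a f (1 : R) = f (a + 1) := by
  simp only [nablaLaplace, sub_self, tsum_zero_pow_smul, Nat.cast_zero, add_zero]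

variable {𝕜 E : Type*} [SeminormedRing 𝕜] [NormOneClass 𝕜] [NormedAddCommGroup E] [Module 𝕜 E]
  [IsBoundedSMul 𝕜 E] [CompleteSpace E] {a : ℤ} {M : ℝ} {f : ℤ → E}

theorem summable_nablaLaplace (hf : ∀ k : ℤ, a + 1 ≤ k → ‖f k‖ ≤ M) {s : 𝕜} (hs : ‖1 - s‖ < 1) :
    Summable fun k : ℕ => (1 - s) ^ k • f (a + 1 + k) :=
  summable_pow_smul_of_norm_le (fun k => hf _ (by lia)) hs

theorem continuousOn_nablaLaplace (hf : ∀ k : ℤ, a + 1 ≤ k → ‖f k‖ ≤ M) :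
    ContinuousOn (nablaLaplace a f : 𝕜 → E) (ball 1 1) :=
  (continuousOn_tsum_pow_smul_of_norm_le fun k : ℕ => hf (a + 1 + k) (by lia)).comp
    (by fun_prop) fun s hs => by rwa [mem_ball_zero_iff, ← mem_ball_iff_norm']

theorem nabla_laplace_initial_value_general (hf : ∀ k : ℤ, a + 1 ≤ k → ‖f k‖ ≤ M) :
    (∀ s : 𝕜, ‖1 - s‖ < 1 → Summable fun k : ℕ => (1 - s) ^ k • f (a + 1 + k)) ∧
      Tendsto (nablaLaplace a f : 𝕜 → E) (𝓝 1) (𝓝 (f (a + 1))) := by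
  refine ⟨fun s hs => summable_nablaLaplace hf hs, ?_⟩
  have hcont : ContinuousAt (nablaLaplace a f : 𝕜 → E) 1 :=
    (continuousOn_nablaLaplace hf).continuousAt (ball_mem_nhds 1 one_pos)
  simpa only [nablaLaplace_one] using hcont.tendsto

end NablaLaplace

/-- initial value theorem for the nabla Laplace transform of a bounded
function `f : ℕ_{a+1} → ℝ`: for `0 < s < 2` the series
`F(s) = ∑_{k=1}^∞ (1-s)^{k-1} f(k+a)` converges, and `F(s) → f(a+1)` as `s → 1`
(with `s` ranging over `(0,2) \ {1}`). -/
theorem nabla_laplace_initial_value (a : ℤ) (M : ℝ) (hM : 0 ≤ M) (f : ℤ → ℝ)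
    (hf : ∀ k : ℤ, a + 1 ≤ k → |f k| ≤ M) :
    (∀ s : ℝ, 0 < s → s < 2 →
      Summable (fun k : ℕ => (1 - s) ^ k * f (a + 1 + k))) ∧
    Filter.Tendsto (fun s : ℝ => ∑' k : ℕ, (1 - s) ^ k * f (a + 1 + k))
      (nhdsWithin 1 (Set.Ioo (0 : ℝ) 2 \ {1})) (nhds (f (a + 1))) := by
  obtain ⟨hsum, hlim⟩ := nabla_laplace_initial_value_general (𝕜 := ℝ) (E := ℝ) hf
  exact ⟨fun s h0 h2 => hsum s (abs_lt.mpr ⟨by linarith, by linarith⟩),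
    hlim.mono_left nhdsWithin_le_nhds⟩
end

section
/- Let a ∈ ℤ, L ∈ ℝ, and let f : ℕ_{a+1} → ℝ satisfy f(a+k) → L as k → ∞. Then for every real s with 0 < s < 1 the series F(s) = ∑_{k=1}^∞ (1-s)^{k-1} f(k+a) converges, and s·F(s) tends to L as s tends to 0 from the right (s ranging over (0,1)). -/
/-!
By summation by parts, `(1 - z) * ∑' k, z ^ k * g k = g 0 + ∑' k, z ^ (k + 1) * (g (k + 1) - g k)`.
The increments of `g` have partial sums telescoping to `L - g 0`, so Abel's limit theorem shows
that the right-hand side tends to `L` as `z → 1⁻`. The theorem is the case `z = 1 - s`.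
-/

open Asymptotics Filter Topology

theorem summable_pow_mul_of_isBigO_one {R : Type*} [NormedRing R] [CompleteSpace R] {z : R}
    {g : ℕ → R} (hz : ‖z‖ < 1) (hg : g =O[atTop] fun _ => (1 : ℝ)) :
    Summable fun k => z ^ k * g k := by
  refine summable_of_isBigO_nat (summable_norm_geometric_of_norm_lt_one hz) ?_
  simpa only [mul_one] using (isBigO_refl (fun k => z ^ k) atTop).norm_right.mul hg

theorem one_sub_mul_tsum_pow_mul {R : Type*} [Ring R] [TopologicalSpace R]
    [IsTopologicalRing R] [T2Space R] {z : R} {g : ℕ → R}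
    (hg : Summable fun k => z ^ k * g k) :
    (1 - z) * ∑' k, z ^ k * g k = g 0 + ∑' k, z ^ (k + 1) * (g (k + 1) - g k) := by
  have hshift : Summable fun k => z ^ (k + 1) * g (k + 1) := (summable_nat_add_iff 1).2 hg
  calc (1 - z) * ∑' k, z ^ k * g k
      = ∑' k, z ^ k * g k - z * ∑' k, z ^ k * g k := by rw [sub_mul, one_mul]
    _ = (g 0 + ∑' k, z ^ (k + 1) * g (k + 1)) - ∑' k, z * (z ^ k * g k) := by
      rw [hg.tsum_mul_left, hg.tsum_eq_zero_add, pow_zero, one_mul]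
    _ = g 0 + ∑' k, (z ^ (k + 1) * g (k + 1) - z * (z ^ k * g k)) := by
      rw [hshift.tsum_sub (hg.mul_left z), add_sub_assoc]
    _ = g 0 + ∑' k, z ^ (k + 1) * (g (k + 1) - g k) := by
      simp only [mul_sub, pow_succ', mul_assoc]

theorem tendsto_one_sub_mul_tsum_pow_mul_nhdsWithin_lt {g : ℕ → ℝ} {L : ℝ}
    (hg : Tendsto g atTop (𝓝 L)) :
    Tendsto (fun z : ℝ => (1 - z) * ∑' k, z ^ k * g k) (𝓝[<] 1) (𝓝 L) := by
  have hpartial : Tendsto (fun n => ∑ k ∈ Finset.range n, (g (k + 1) - g k)) atTop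
      (𝓝 (L - g 0)) := by
    simpa only [Finset.sum_range_sub] using hg.sub_const (g 0)
  have habel : Tendsto (fun z : ℝ => g 0 + z * ∑' k, (g (k + 1) - g k) * z ^ k) (𝓝[<] 1)
      (𝓝 (g 0 + 1 * (L - g 0))) :=
    ((tendsto_id.mono_left nhdsWithin_le_nhds).mul
      (Real.tendsto_tsum_powerSeries_nhdsWithin_lt hpartial)).const_add (g 0)
  rw [one_mul, add_sub_cancel] at habel
  refine habel.congr' ?_
  filter_upwards [Ioo_mem_nhdsLT (show (-1 : ℝ) < 1 by norm_num)] with z hz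
  have hsum : Summable fun k => z ^ k * g k :=
    summable_pow_mul_of_isBigO_one (abs_lt.2 hz) (hg.isBigO_one ℝ)
  rw [one_sub_mul_tsum_pow_mul hsum]
  simp only [pow_succ', mul_assoc, tsum_mul_left, mul_comm (z ^ _)]

/-- final value theorem for the nabla Laplace transform: if
`f(a+k) → L` as `k → ∞`, then for every `s ∈ (0,1)` the series
`F(s) = ∑_{k=1}^∞ (1-s)^{k-1} f(k+a)` converges, and `s·F(s) → L` as `s → 0⁺`
(with `s` ranging over `(0,1)`). -/
theorem nabla_laplace_final_value (a : ℤ) (L : ℝ) (f : ℤ → ℝ)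
    (hf : Filter.Tendsto (fun k : ℕ => f (a + k)) Filter.atTop (nhds L)) :
    (∀ s : ℝ, 0 < s → s < 1 →
      Summable (fun k : ℕ => (1 - s) ^ k * f (a + 1 + k))) ∧
    Filter.Tendsto (fun s : ℝ => s * ∑' k : ℕ, (1 - s) ^ k * f (a + 1 + k))
      (nhdsWithin 0 (Set.Ioo (0 : ℝ) 1)) (nhds L) := by
  have hshift : Tendsto (fun k : ℕ => f (a + 1 + k)) atTop (𝓝 L) := by
    refine ((tendsto_add_atTop_iff_nat 1).2 hf).congr fun k => ?_
    rw [Nat.cast_succ, add_assoc, add_comm (1 : ℤ)]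
  have hreflect : Tendsto (fun s : ℝ => 1 - s) (𝓝[Set.Ioo 0 1] 0) (𝓝[<] 1) := by
    refine tendsto_nhdsWithin_iff.2 ⟨?_, ?_⟩
    · exact (Continuous.tendsto' (by fun_prop) 0 1 (sub_zero 1)).mono_left nhdsWithin_le_nhds
    · filter_upwards [self_mem_nhdsWithin] with s hs
      exact sub_lt_self 1 hs.1
  constructor
  · intro s hs0 hs1
    have hnorm : ‖1 - s‖ < 1 := abs_lt.2 ⟨by linarith, by linarith⟩
    exact summable_pow_mul_of_isBigO_one hnorm (hshift.isBigO_one ℝ)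
  · simpa only [Function.comp_def, sub_sub_cancel] using
      (tendsto_one_sub_mul_tsum_pow_mul_nhdsWithin_lt hshift).comp hreflect
end

section
/- Let a ∈ ℤ, α > 0, β > 0, let s be a real number with 0 < s ≤ 1, and let λ be a real number with |λ| < s^α. Then the nabla Laplace transform of the discrete Mittag–Leffler function satisfies ∑_{k=1}^∞ (1-s)^{k-1} F_{α,β}(λ, k+a, a) = s^{α-β}/(s^α - λ). -/
/-!
The numbers `Γ(γ + k) / (Γ(γ) k!) = Ring.multichoose γ k` are the coefficients of the binomial
series of `(1 - x) ^ (-γ)`. With `x = 1 - s` and `γ = jα + β` they turn the transform into a double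
series over `(j, k)` whose sum over `k` is `λ ^ j s ^ (-(jα + β))`, which leaves a geometric series
in `j`. For `γ > 0` the coefficients are positive, so taking absolute values replaces `x` by `|x|`
and `λ` by `|λ|`: the double series converges absolutely as soon as `|λ| < (1 - |x|) ^ α`.
-/

/-- The rising function `p^{q̄} = Γ(p+q)/Γ(p)`. -/
noncomputable def rise (p : ℤ) (q : ℝ) : ℝ :=
  Real.Gamma ((p : ℝ) + q) / Real.Gamma (p : ℝ)

/-- The discrete Mittag–Leffler function
`F_{α,β}(λ,k,a) = ∑_{j=0}^∞ λ^j (k-a)^{\overline{jα+β-1}}/Γ(jα+β)`. -/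
noncomputable def discML (α β lam : ℝ) (k a : ℤ) : ℝ :=
  ∑' j : ℕ, lam ^ j * rise (k - a) ((j : ℝ) * α + β - 1) / Real.Gamma ((j : ℝ) * α + β)

theorem Gamma_add_natCast_div_Gamma {γ : ℝ} (hγ : ∀ m : ℕ, γ ≠ -m) (k : ℕ) :
    Real.Gamma (γ + k) / Real.Gamma γ = (ascPochhammer ℝ k).eval γ := by
  induction k with
  | zero => simp [Real.Gamma_ne_zero hγ]
  | succ k ih =>
    have hne : γ + k ≠ 0 := fun h => hγ k (eq_neg_of_add_eq_zero_left h)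
    rw [ascPochhammer_succ_eval, ← ih, Nat.cast_add_one, ← add_assoc, Real.Gamma_add_one hne,
      mul_div_assoc, mul_comm]

theorem factorial_mul_multichoose {R : Type*} [CommRing R] [BinomialRing R] (r : R) (k : ℕ) :
    (k.factorial : R) * Ring.multichoose r k = (ascPochhammer R k).eval r := by
  rw [← nsmul_eq_mul, Ring.factorial_nsmul_multichoose_eq_ascPochhammer,
    Polynomial.ascPochhammer_smeval_eq_eval]

theorem multichoose_pos {R : Type*} [CommRing R] [LinearOrder R] [IsStrictOrderedRing R]
    [BinomialRing R] {r : R} (hr : 0 < r) (k : ℕ) : 0 < Ring.multichoose r k :=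
  pos_of_mul_pos_right (factorial_mul_multichoose r k ▸ ascPochhammer_pos k r hr)
    (Nat.cast_nonneg _)

theorem rise_one_add_natCast (γ : ℝ) (k : ℕ) :
    rise (1 + k) (γ - 1) = Real.Gamma (γ + k) / k.factorial := by
  rw [rise, ← Real.Gamma_nat_eq_factorial]
  push_cast
  ring_nf

theorem rise_div_Gamma {γ : ℝ} (hγ : ∀ m : ℕ, γ ≠ -m) (k : ℕ) :
    rise (1 + k) (γ - 1) / Real.Gamma γ = Ring.multichoose γ k := by
  rw [rise_one_add_natCast, div_right_comm, Gamma_add_natCast_div_Gamma hγ,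
    ← factorial_mul_multichoose, mul_div_cancel_left₀ _ (mod_cast k.factorial_ne_zero)]

theorem discML_eq_tsum_multichoose {α β : ℝ} (hγ : ∀ j m : ℕ, (j : ℝ) * α + β ≠ -m) (lam : ℝ)
    (a : ℤ) (k : ℕ) :
    discML α β lam (a + 1 + k) a = ∑' j : ℕ, lam ^ j * Ring.multichoose (j * α + β) k := by
  have hk : a + 1 + (k : ℤ) - a = 1 + k := by ring
  simp only [discML, hk, mul_div_assoc, rise_div_Gamma (hγ _)]

theorem hasSum_multichoose_mul_pow (γ : ℝ) {x : ℝ} (hx : |x| < 1) :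
    HasSum (fun k : ℕ => Ring.multichoose γ k * x ^ k) ((1 - x) ^ (-γ)) := by
  have hball : x ∈ Metric.eball (0 : ℝ) 1 := by
    simpa [enorm_eq_nnnorm, ← NNReal.coe_lt_coe] using hx
  have h := (Real.one_div_one_sub_rpow_hasFPowerSeriesOnBall_zero γ).hasSum hball
  simpa only [FormalMultilinearSeries.ofScalars_apply_eq, smul_eq_mul, zero_add, one_div,
    ← Real.rpow_neg (sub_nonneg.2 (abs_lt.1 hx).2.le), ← Ring.multichoose_eq] using h

theorem hasSum_pow_mul_rpow_neg {s α lam : ℝ} (hs : 0 < s) (β : ℝ) (hlam : |lam| < s ^ α) :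
    HasSum (fun j : ℕ => lam ^ j * s ^ (-(j * α + β))) (s ^ (α - β) / (s ^ α - lam)) := by
  have hsα : 0 < s ^ α := Real.rpow_pos_of_pos hs α
  have hratio : |lam / s ^ α| < 1 := by rwa [abs_div, abs_of_pos hsα, div_lt_one hsα]
  have hterm (j : ℕ) : lam ^ j * s ^ (-(j * α + β)) = s ^ (-β) * (lam / s ^ α) ^ j := by
    rw [neg_add, Real.rpow_add hs, Real.rpow_neg hs.le, mul_comm (j : ℝ) α,
      Real.rpow_mul_natCast hs.le, div_pow]
    ring
  have hvalue : s ^ (α - β) / (s ^ α - lam) = s ^ (-β) * (1 - lam / s ^ α)⁻¹ := by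
    rw [sub_eq_add_neg α β, Real.rpow_add hs, one_sub_div hsα.ne', inv_div]
    ring
  simpa only [hterm, hvalue] using
    (hasSum_geometric_of_abs_lt_one hratio).mul_left (s ^ (-β))

section DoubleSeries

variable {α β x lam : ℝ}

theorem summable_pow_mul_multichoose_mul_pow (hα : 0 ≤ α) (hβ : 0 < β) (hx : |x| < 1)
    (hlam : |lam| < (1 - |x|) ^ α) :
    Summable fun p : ℕ × ℕ => lam ^ p.1 * (Ring.multichoose (p.1 * α + β) p.2 * x ^ p.2) := by
  have hpos (j k : ℕ) : 0 < Ring.multichoose (j * α + β) k := multichoose_pos (by positivity) k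
  have habs (j k : ℕ) : |lam ^ j * (Ring.multichoose (j * α + β) k * x ^ k)| =
      |lam| ^ j * (Ring.multichoose (j * α + β) k * |x| ^ k) := by
    rw [abs_mul, abs_mul, abs_pow, abs_pow, abs_of_pos (hpos j k)]
  have hrow (j : ℕ) : HasSum
      (fun k : ℕ => |lam| ^ j * (Ring.multichoose (j * α + β) k * |x| ^ k))
      (|lam| ^ j * (1 - |x|) ^ (-(j * α + β))) :=
    (hasSum_multichoose_mul_pow _ (by rwa [abs_abs])).mul_left _
  rw [← summable_abs_iff, summable_prod_of_nonneg fun _ => abs_nonneg _]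
  simp only [habs, (hrow _).tsum_eq]
  exact ⟨fun j => (hrow j).summable,
    (hasSum_pow_mul_rpow_neg (sub_pos.2 hx) β (by rwa [abs_abs])).summable⟩

theorem hasSum_pow_mul_tsum_multichoose (hα : 0 ≤ α) (hβ : 0 < β) (hx : |x| < 1)
    (hlam : |lam| < (1 - |x|) ^ α) :
    HasSum (fun k : ℕ => x ^ k * ∑' j : ℕ, lam ^ j * Ring.multichoose (j * α + β) k)
      ((1 - x) ^ (α - β) / ((1 - x) ^ α - lam)) := by
  have hsum := summable_pow_mul_multichoose_mul_pow hα hβ hx hlam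
  have hrow (j : ℕ) : HasSum
      (fun k : ℕ => lam ^ j * (Ring.multichoose (j * α + β) k * x ^ k))
      (lam ^ j * (1 - x) ^ (-(j * α + β))) :=
    (hasSum_multichoose_mul_pow _ hx).mul_left _
  have hcol (k : ℕ) : x ^ k * ∑' j : ℕ, lam ^ j * Ring.multichoose (j * α + β) k =
      ∑' j : ℕ, lam ^ j * (Ring.multichoose (j * α + β) k * x ^ k) := by
    rw [← tsum_mul_left]
    exact tsum_congr fun j => by ring
  have hlam' : |lam| < (1 - x) ^ α :=
    hlam.trans_le <| Real.rpow_le_rpow (sub_nonneg.2 hx.le)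
      (sub_le_sub_left (le_abs_self x) 1) hα
  have hcols : Summable fun k : ℕ =>
      ∑' j : ℕ, lam ^ j * (Ring.multichoose (j * α + β) k * x ^ k) := hsum.prod_symm.prod
  simp only [hcol]
  refine hcols.hasSum_iff.2 ?_
  calc ∑' k : ℕ, ∑' j : ℕ, lam ^ j * (Ring.multichoose (j * α + β) k * x ^ k)
      = ∑' j : ℕ, ∑' k : ℕ, lam ^ j * (Ring.multichoose (j * α + β) k * x ^ k) :=
        hsum.tsum_comm
    _ = ∑' j : ℕ, lam ^ j * (1 - x) ^ (-(j * α + β)) := tsum_congr fun j => (hrow j).tsum_eq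
    _ = (1 - x) ^ (α - β) / ((1 - x) ^ α - lam) :=
        (hasSum_pow_mul_rpow_neg (sub_pos.2 (abs_lt.1 hx).2) β hlam').tsum_eq

end DoubleSeries

theorem nabla_laplace_discML_general (a : ℤ) {α β s lam : ℝ} (hα : 0 ≤ α) (hβ : 0 < β)
    (hs : |1 - s| < 1) (hlam : |lam| < (1 - |1 - s|) ^ α) :
    HasSum (fun k : ℕ => (1 - s) ^ k * discML α β lam (a + 1 + k) a)
      (s ^ (α - β) / (s ^ α - lam)) := by
  have hγ (j m : ℕ) : (j : ℝ) * α + β ≠ -m :=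
    ((neg_nonpos.2 m.cast_nonneg).trans_lt (by positivity)).ne'
  simpa only [discML_eq_tsum_multichoose hγ, sub_sub_cancel] using
    hasSum_pow_mul_tsum_multichoose hα hβ hs hlam

/-- nabla Laplace transform of the discrete Mittag–Leffler function:
for `α, β > 0`, `0 < s ≤ 1` and `|λ| < s^α`,
`∑_{k=1}^∞ (1-s)^{k-1} F_{α,β}(λ,k+a,a) = s^{α-β}/(s^α - λ)`. -/
theorem nabla_laplace_discML (a : ℤ) (α β : ℝ) (hα : 0 < α) (hβ : 0 < β)
    (s : ℝ) (hs0 : 0 < s) (hs1 : s ≤ 1) (lam : ℝ) (hlam : |lam| < s ^ α) :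
    (∑' k : ℕ, (1 - s) ^ k * discML α β lam (a + 1 + k) a)
      = s ^ (α - β) / (s ^ α - lam) := by
  have habs : |1 - s| = 1 - s := abs_of_nonneg (sub_nonneg.2 hs1)
  exact (nabla_laplace_discML_general a hα.le hβ (by rw [habs]; linarith)
    (by rwa [habs, sub_sub_cancel])).tsum_eq
end

section
/- Let a ∈ ℤ, γ > 0, μ > 0, and k ∈ ℕ_{a+1}. Then ∑_{j=0}^{k-a-1} [Γ(j+γ)/(Γ(γ)·Γ(j+1))] · (k-j-a)^{\overline{μ-1}}/Γ(μ) = (k-a)^{\overline{μ+γ-1}}/Γ(μ+γ). In other words, the γ-th nabla fractional sum of the function k ↦ (k-a)^{\overline{μ-1}}/Γ(μ) equals (k-a)^{\overline{μ+γ-1}}/Γ(μ+γ). -/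
/-!
Both `Γ(n+x) / (Γ(x) Γ(n+1))` and `(n+1)^{\overline{x-1}} / Γ(x)` are the multichoose number
`x(x+1)⋯(x+n-1) / n!`, the coefficient of `tⁿ` in `(1-t)^{-x}`. With `k - a = n + 1`, the claim
compares the coefficients of `tⁿ` in `(1-t)^{-γ} (1-t)^{-μ} = (1-t)^{-(γ+μ)}`, which is the
Chu–Vandermonde identity.
-/

open Finset Ring

theorem multichoose_add_eq {R : Type*} [Ring R] [BinomialRing R] {r s : R} (n : ℕ)
    (h : Commute r s) :
    multichoose (r + s) n = ∑ ij ∈ antidiagonal n, multichoose r ij.1 * multichoose s ij.2 := by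
  have vandermonde := add_choose_eq n h.neg_left.neg_right
  simp_rw [← neg_add, choose_neg', smul_mul_smul_comm, ← Int.negOnePow_add, ← Nat.cast_add]
    at vandermonde
  rw [← smul_left_cancel_iff (Int.negOnePow n), vandermonde, smul_sum]
  refine sum_congr rfl fun ij hij ↦ ?_
  rw [mem_antidiagonal.mp hij]

theorem Gamma_add_nat_div_Gamma_eq_ascPochhammer_eval {x : ℝ} (hx : ∀ m : ℕ, x ≠ -m) (n : ℕ) :
    Real.Gamma (x + n) / Real.Gamma x = (ascPochhammer ℝ n).eval x := by
  have eval_ofReal : (ascPochhammer ℂ n).eval (x : ℂ) = ((ascPochhammer ℝ n).eval x : ℝ) := by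
    rw [← ascPochhammer_map Complex.ofRealHom]
    exact Polynomial.eval_map_apply Complex.ofRealHom x
  have complex_quotient :=
    Complex.Gamma_add_nat_div_Gamma_eq (n := n) (x : ℂ) (by exact_mod_cast hx)
  rw [eval_ofReal, ← Complex.ofReal_natCast, ← Complex.ofReal_add] at complex_quotient
  simp only [Complex.Gamma_ofReal] at complex_quotient
  exact_mod_cast complex_quotient

theorem Gamma_nat_add_div_eq_multichoose {x : ℝ} (hx : ∀ m : ℕ, x ≠ -m) (n : ℕ) :
    Real.Gamma (n + x) / (Real.Gamma x * Real.Gamma (n + 1)) = multichoose x n := by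
  rw [← div_div, add_comm (n : ℝ) x, Gamma_add_nat_div_Gamma_eq_ascPochhammer_eval hx,
    Real.Gamma_nat_eq_factorial, div_eq_iff (by positivity),
    ← Polynomial.ascPochhammer_smeval_eq_eval, ← factorial_nsmul_multichoose_eq_ascPochhammer,
    nsmul_eq_mul, mul_comm]

theorem rise_div_Gamma_eq_multichoose {x : ℝ} (hx : ∀ m : ℕ, x ≠ -m) (n : ℕ) :
    rise (n + 1) (x - 1) / Real.Gamma x = multichoose x n := by
  rw [← Gamma_nat_add_div_eq_multichoose hx, rise, div_div, mul_comm (Real.Gamma x)]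
  push_cast
  rw [add_add_sub_cancel]

theorem nabla_fracsum_rising_general (a : ℤ) (γ μ : ℝ) (hγ : ∀ m : ℕ, γ ≠ -m)
    (hμ : ∀ m : ℕ, μ ≠ -m) (hμγ : ∀ m : ℕ, μ + γ ≠ -m)
    (k : ℤ) (hk : a + 1 ≤ k) :
    ∑ j ∈ Finset.range (k - a).toNat,
        (Real.Gamma ((j : ℝ) + γ) / (Real.Gamma γ * Real.Gamma ((j : ℝ) + 1))) *
          (rise (k - j - a) (μ - 1) / Real.Gamma μ)
      = rise (k - a) (μ + γ - 1) / Real.Gamma (μ + γ) := by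
  obtain ⟨n, rfl⟩ : ∃ n : ℕ, k = a + (n + 1) := ⟨(k - a - 1).toNat, by lia⟩
  have length_eq : (a + (n + 1 : ℤ) - a).toNat = n + 1 := by lia
  rw [length_eq, add_sub_cancel_left, rise_div_Gamma_eq_multichoose hμγ, add_comm μ γ,
    multichoose_add_eq n (Commute.all γ μ),
    Nat.sum_antidiagonal_eq_sum_range_succ (fun i j ↦ multichoose γ i * multichoose μ j)]
  refine sum_congr rfl fun j hj ↦ ?_
  have shift_eq : a + (n + 1 : ℤ) - j - a = (n - j : ℕ) + 1 := by
    have := mem_range.mp hj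
    lia
  rw [Gamma_nat_add_div_eq_multichoose hγ, shift_eq, rise_div_Gamma_eq_multichoose hμ]

/-- for `γ, μ > 0` and `k ∈ ℕ_{a+1}`, the `γ`-th nabla fractional sum
of `k ↦ (k-a)^{\overline{μ-1}}/Γ(μ)` equals `(k-a)^{\overline{μ+γ-1}}/Γ(μ+γ)`:
`∑_{j=0}^{k-a-1} (Γ(j+γ)/(Γ(γ)Γ(j+1))) · (k-j-a)^{\overline{μ-1}}/Γ(μ)
  = (k-a)^{\overline{μ+γ-1}}/Γ(μ+γ)`. -/
theorem nabla_fracsum_rising (a : ℤ) (γ μ : ℝ) (hγ : 0 < γ) (hμ : 0 < μ)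
    (k : ℤ) (hk : a + 1 ≤ k) :
    ∑ j ∈ Finset.range (k - a).toNat,
        (Real.Gamma ((j : ℝ) + γ) / (Real.Gamma γ * Real.Gamma ((j : ℝ) + 1))) *
          (rise (k - j - a) (μ - 1) / Real.Gamma μ)
      = rise (k - a) (μ + γ - 1) / Real.Gamma (μ + γ) := by
  have ne_neg {x : ℝ} (hx : 0 < x) (m : ℕ) : x ≠ -m := by linarith [m.cast_nonneg (α := ℝ)]
  exact nabla_fracsum_rising_general a γ μ (ne_neg hγ) (ne_neg hμ) (ne_neg (add_pos hμ hγ)) k hk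
end

section
/- Let a ∈ ℤ, let n be a positive integer and n-1 < α < n, let κ be a natural number with κ < n, and let λ be a real number with |λ| < 1. Extend the discrete Mittag–Leffler function F_{α,κ+1}(λ,·,a) to arguments k ≤ a by setting F_{α,κ+1}(λ,k,a) := ∏_{i=0}^{κ-1}(k-a+i)/κ! (with the empty product equal to 1 when κ = 0). Then for every k ∈ ℕ_{a+1}, the nabla Caputo fractional difference satisfies ₐ∇ₖ^α F_{α,κ+1}(λ,k,a) = λ·F_{α,κ+1}(λ,k,a). -/
/-- The discrete Mittag–Leffler function `F_{α,κ+1}(λ,k,a)` for `k ≥ a+1`, extended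
to `k ≤ a` by `∏_{i=0}^{κ-1}(k-a+i)/κ!` (empty product `= 1` when `κ = 0`). -/
noncomputable def MLext (α : ℝ) (κ : ℕ) (lam : ℝ) (a k : ℤ) : ℝ :=
  if a + 1 ≤ k then
    ∑' j : ℕ, lam ^ j * rise (k - a) ((j : ℝ) * α + (κ : ℝ) + 1 - 1) /
      Real.Gamma ((j : ℝ) * α + (κ : ℝ) + 1)
  else (∏ i ∈ Finset.range κ, ((k : ℝ) - (a : ℝ) + (i : ℝ))) / (Nat.factorial κ : ℝ)

/-- The `n`-th backward difference `∇ⁿ f(k) = ∑_{j=0}^n (-1)^j C(n,j) f(k-j)`. -/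
noncomputable def bdiff (n : ℕ) (f : ℤ → ℝ) (k : ℤ) : ℝ :=
  ∑ j ∈ Finset.range (n + 1), (-1 : ℝ) ^ j * (n.choose j : ℝ) * f (k - j)

/-- The `γ`-th nabla fractional sum
`ₐ∇ₖ^{-γ} f(k) = ∑_{j=0}^{k-a-1} (Γ(j+γ)/(Γ(γ)Γ(j+1))) f(k-j)`. -/
noncomputable def nsum (a : ℤ) (γ : ℝ) (f : ℤ → ℝ) (k : ℤ) : ℝ :=
  ∑ j ∈ Finset.range (k - a).toNat,
    (Real.Gamma ((j : ℝ) + γ) / (Real.Gamma γ * Real.Gamma ((j : ℝ) + 1))) * f (k - j)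

/-- The nabla Caputo fractional difference
`ₐ∇ₖ^α f(k) = ₐ∇ₖ^{-(n-α)}(∇ⁿ f)(k)` for `n-1 < α < n`. -/
noncomputable def caputo (a : ℤ) (α : ℝ) (n : ℕ) (f : ℤ → ℝ) (k : ℤ) : ℝ :=
  nsum a ((n : ℝ) - α) (bdiff n f) k

open Finset Polynomial
open scoped Nat

section Multichoose

theorem multichoose_natCast_add_one_comm {R : Type*} [Ring R] [BinomialRing R] (m n : ℕ) :
    Ring.multichoose ((m : R) + 1) n = Ring.multichoose ((n : R) + 1) m := by
  have hchoose (i j : ℕ) : Ring.multichoose ((i : R) + 1) j = ((i + j).choose j : R) := by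
    rw [Ring.multichoose_eq, ← Ring.choose_natCast]
    congr 1
    push_cast
    abel
  rw [hchoose, hchoose, add_comm n m, Nat.choose_symm_add]

theorem multichoose_eq_neg_one_pow_mul_choose_neg {R : Type*} [Ring R] [BinomialRing R]
    (β : R) (m : ℕ) : Ring.multichoose β m = (-1) ^ m * Ring.choose (-β) m := by
  rw [Ring.choose_neg', Units.smul_def, zsmul_eq_mul, Int.cast_negOnePow_natCast, ← mul_assoc,
    ← pow_add, Even.neg_one_pow ⟨m, rfl⟩, one_mul]

theorem multichoose_neg_natCast {R : Type*} [Ring R] [BinomialRing R] (n j : ℕ) :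
    Ring.multichoose (-(n : R)) j = (-1) ^ j * (n.choose j : R) := by
  rw [multichoose_eq_neg_one_pow_mul_choose_neg, neg_neg, Ring.choose_natCast]

theorem multichoose_add {R : Type*} [CommRing R] [BinomialRing R] (β γ : R) (m : ℕ) :
    Ring.multichoose (β + γ) m =
      ∑ ij ∈ antidiagonal m, Ring.multichoose β ij.1 * Ring.multichoose γ ij.2 := by
  simp only [multichoose_eq_neg_one_pow_mul_choose_neg, neg_add,
    Ring.add_choose_eq m (Commute.all (-β) (-γ)), mul_sum]
  refine sum_congr rfl fun ij hij => ?_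
  rw [← mem_antidiagonal.mp hij, pow_add]
  ring

/-- The polynomial `X (X + 1) ⋯ (X + m - 1) / m!`, whose evaluation is `Ring.multichoose · m`. -/
noncomputable def multichoosePoly (K : Type*) [Field K] (m : ℕ) : K[X] :=
  C ((m ! : K)⁻¹) * ascPochhammer K m

variable {K : Type*} [Field K] [CharZero K]

theorem natDegree_multichoosePoly (m : ℕ) : (multichoosePoly K m).natDegree = m := by
  rw [multichoosePoly, natDegree_C_mul (inv_ne_zero (by exact_mod_cast m.factorial_ne_zero)),
    ascPochhammer_natDegree]

theorem multichoose_eq_ascPochhammer_eval_div (β : K) (m : ℕ) :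
    Ring.multichoose β m = (ascPochhammer K m).eval β / m ! := by
  have hm : (m ! : K) ≠ 0 := by exact_mod_cast m.factorial_ne_zero
  rw [eq_div_iff hm, mul_comm, ← nsmul_eq_mul, Ring.factorial_nsmul_multichoose_eq_ascPochhammer,
    ascPochhammer_smeval_eq_eval]

theorem eval_multichoosePoly (β : K) (m : ℕ) :
    (multichoosePoly K m).eval β = Ring.multichoose β m := by
  rw [multichoosePoly, eval_C_mul, multichoose_eq_ascPochhammer_eval_div, div_eq_inv_mul]

theorem multichoose_eq_prod_div (β : K) (m : ℕ) :
    Ring.multichoose β m = (∏ i ∈ range m, (β + i)) / m ! := by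
  rw [multichoose_eq_ascPochhammer_eval_div]
  congr 1
  induction m with
  | zero => simp
  | succ m ih => rw [prod_range_succ, ascPochhammer_succ_eval, ih]

theorem Gamma_natCast_add_div_eq_multichoose {β : ℝ} (hβ : ∀ i : ℕ, β ≠ -i) (m : ℕ) :
    Real.Gamma (m + β) / (Real.Gamma β * Real.Gamma (m + 1)) = Ring.multichoose β m := by
  have hΓ : Real.Gamma (β + m) / Real.Gamma β = (ascPochhammer ℝ m).eval β := by
    have hΓℂ := Complex.Gamma_add_nat_div_Gamma_eq (n := m) (β : ℂ) (by exact_mod_cast hβ)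
    have heval : (ascPochhammer ℂ m).eval (β : ℂ) = (ascPochhammer ℝ m).eval β := by
      rw [← ascPochhammer_map Complex.ofRealHom]
      exact eval_map_apply Complex.ofRealHom β
    rw [heval, ← Complex.ofReal_natCast, ← Complex.ofReal_add, Complex.Gamma_ofReal,
      Complex.Gamma_ofReal] at hΓℂ
    exact_mod_cast hΓℂ
  rw [add_comm (m : ℝ) β, ← div_div, hΓ, Real.Gamma_nat_eq_factorial,
    multichoose_eq_ascPochhammer_eval_div]

end Multichoose

section NablaSum

variable {R : Type*} [CommRing R] [BinomialRing R]

/-- The nabla sum of arbitrary order `γ` of a sequence: on generating functions, multiplication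
by `(1 - x) ^ (-γ)`. For `γ = -n` this is the `n`-th backward difference of the sequence continued
by zero to negative indices. -/
noncomputable def nablaSum (γ : R) (u : ℕ → R) (m : ℕ) : R :=
  ∑ ij ∈ antidiagonal m, Ring.multichoose γ ij.1 * u ij.2

theorem nablaSum_eq_sum_range (γ : R) (u : ℕ → R) (m : ℕ) :
    nablaSum γ u m = ∑ j ∈ range (m + 1), Ring.multichoose γ j * u (m - j) :=
  Nat.sum_antidiagonal_eq_sum_range_succ (fun i l => Ring.multichoose γ i * u l) m

theorem nablaSum_const_mul (γ c : R) (u : ℕ → R) (m : ℕ) :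
    nablaSum γ (fun l => c * u l) m = c * nablaSum γ u m := by
  simp only [nablaSum, mul_sum, mul_left_comm]

theorem nsum_add_one_add_natCast {γ : ℝ} (hγ : ∀ i : ℕ, γ ≠ -i) (a : ℤ) (f : ℤ → ℝ) (m : ℕ) :
    nsum a γ f (a + 1 + m) = nablaSum γ (fun l => f (a + 1 + l)) m := by
  rw [nsum, nablaSum_eq_sum_range, show (a + 1 + (m : ℤ) - a).toNat = m + 1 by omega]
  refine sum_congr rfl fun j hj => ?_
  have hjm : j ≤ m := mem_range_succ_iff.mp hj
  rw [Gamma_natCast_add_div_eq_multichoose hγ, Nat.cast_sub hjm, add_sub_assoc]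

end NablaSum

section BackwardDifference

theorem bdiff_add_const_mul (n : ℕ) (c : ℝ) (f g : ℤ → ℝ) (k : ℤ) :
    bdiff n (fun i => f i + c * g i) k = bdiff n f k + c * bdiff n g k := by
  simp only [bdiff, mul_sum, ← sum_add_distrib]
  exact sum_congr rfl fun j _ => by ring

theorem bdiff_comp_intCast (n : ℕ) (g : ℝ → ℝ) (k : ℤ) :
    bdiff n (fun i => g i) k = (fwdDiff 1)^[n] g (k - n) := by
  rw [fwdDiff_iter_eq_sum_shift, bdiff, ← sum_flip]
  refine sum_congr rfl fun j hj => ?_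
  have hjn : j ≤ n := mem_range_succ_iff.mp hj
  rw [Nat.choose_symm hjn, zsmul_eq_mul]
  push_cast [hjn]
  congr 2
  simp only [nsmul_eq_mul, mul_one]
  ring

theorem bdiff_eval_eq_zero {n : ℕ} {p : ℝ[X]} (hp : p.natDegree < n) (k : ℤ) :
    bdiff n (fun i => p.eval (i : ℝ)) k = 0 := by
  rw [bdiff_comp_intCast n p.eval, fwdDiff_iter_eq_zero_of_degree_lt hp, Pi.zero_apply]

/-- The sequence `u` placed at `a + 1, a + 2, …` and continued by zero to `k ≤ a`. -/
def zeroExtend {M : Type*} [Zero M] (a : ℤ) (u : ℕ → M) (k : ℤ) : M :=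
  if a + 1 ≤ k then u (k - a - 1).toNat else 0

theorem zeroExtend_of_le {M : Type*} [Zero M] {a k : ℤ} (hk : k ≤ a) (u : ℕ → M) :
    zeroExtend a u k = 0 :=
  if_neg (by omega)

theorem zeroExtend_add_one_add_natCast {M : Type*} [Zero M] (a : ℤ) (u : ℕ → M) (m : ℕ) :
    zeroExtend a u (a + 1 + m) = u m := by
  rw [zeroExtend, if_pos (by omega), show (a + 1 + (m : ℤ) - a - 1).toNat = m by omega]

theorem bdiff_zeroExtend (n : ℕ) (a : ℤ) (u : ℕ → ℝ) (m : ℕ) :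
    bdiff n (zeroExtend a u) (a + 1 + m) = nablaSum (-(n : ℝ)) u m := by
  simp only [bdiff, nablaSum_eq_sum_range, ← multichoose_neg_natCast]
  refine sum_congr_of_eq_on_inter (fun j _ hj => ?_) (fun j _ hj => ?_) fun j _ hj => ?_
  · have hmj : m < j := by simpa using hj
    rw [zeroExtend_of_le (by omega), mul_zero]
  · have hnj : n < j := by simpa using hj
    rw [multichoose_neg_natCast, Nat.choose_eq_zero_of_lt hnj, Nat.cast_zero, mul_zero, zero_mul]
  · have hjm : j ≤ m := mem_range_succ_iff.mp hj
    rw [← zeroExtend_add_one_add_natCast a u (m - j), Nat.cast_sub hjm, add_sub_assoc]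

end BackwardDifference

section MittagLefflerSeries

theorem summable_pow_mul_eval_natCast {R : Type*} [NormedCommRing R] [HasSummableGeomSeries R]
    {r : R} (hr : ‖r‖ < 1) (p : R[X]) : Summable fun j : ℕ => r ^ j * p.eval (j : R) := by
  have hexpand (j : ℕ) : r ^ j * p.eval (j : R) =
      ∑ i ∈ range (p.natDegree + 1), p.coeff i * ((j : R) ^ i * r ^ j) := by
    rw [eval_eq_sum_range, mul_sum]
    exact sum_congr rfl fun i _ => by ring
  simp only [hexpand]
  exact summable_sum fun i _ => (summable_pow_mul_geometric_of_norm_lt_one i hr).mul_left _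

variable {𝕜 : Type*} [NormedField 𝕜] [CharZero 𝕜]

/-- The discrete Mittag–Leffler function `F_{α,b}(λ,·,a)` as a sequence: its value at `a + 1 + m`,
the `j`-th term being written with `Ring.multichoose` instead of quotients of Gamma values. -/
noncomputable def mlSeries (α lam b : 𝕜) (m : ℕ) : 𝕜 :=
  ∑' j : ℕ, lam ^ j * Ring.multichoose (j * α + b) m

theorem summable_mlSeries {lam : 𝕜} (hlam : ‖lam‖ < 1) (α b : 𝕜) (m : ℕ) :
    Summable fun j : ℕ => lam ^ j * Ring.multichoose (j * α + b) m := by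
  refine (summable_pow_mul_eval_natCast hlam
    ((multichoosePoly 𝕜 m).comp (X * C α + C b))).congr fun j => ?_
  rw [eval_comp, eval_multichoosePoly]
  simp only [eval_add, eval_mul, eval_X, eval_C]

theorem nablaSum_mlSeries {lam : 𝕜} (hlam : ‖lam‖ < 1) (α b γ : 𝕜) (m : ℕ) :
    nablaSum γ (mlSeries α lam b) m = mlSeries α lam (b + γ) m := by
  simp only [nablaSum, mlSeries, ← tsum_mul_left]
  have hsum (ij : ℕ × ℕ) : Summable fun j : ℕ =>
      Ring.multichoose γ ij.1 * (lam ^ j * Ring.multichoose (j * α + b) ij.2) :=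
    (summable_mlSeries hlam α b ij.2).mul_left _
  rw [← Summable.tsum_finsetSum fun ij _ => hsum ij]
  refine tsum_congr fun j => ?_
  rw [← add_assoc, add_comm _ γ, multichoose_add, mul_sum]
  exact sum_congr rfl fun _ _ => mul_left_comm _ _ _

theorem mlSeries_eq_multichoose_add {lam : 𝕜} (hlam : ‖lam‖ < 1) (α b : 𝕜) (m : ℕ) :
    mlSeries α lam b m = Ring.multichoose b m + lam * mlSeries α lam (α + b) m := by
  rw [mlSeries, (summable_mlSeries hlam α b m).tsum_eq_zero_add, mlSeries, ← tsum_mul_left]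
  congr 1
  · simp
  · refine tsum_congr fun j => ?_
    rw [Nat.cast_succ, add_one_mul, add_assoc, pow_succ', mul_assoc]

end MittagLefflerSeries

section MittagLefflerFunction

theorem MLext_add_one_add_natCast {α : ℝ} (hα : 0 ≤ α) (κ : ℕ) (lam : ℝ) (a : ℤ) (m : ℕ) :
    MLext α κ lam a (a + 1 + m) = mlSeries α lam (κ + 1) m := by
  rw [MLext, if_pos (by omega), mlSeries]
  refine tsum_congr fun j => ?_
  have hpos : 0 < (j : ℝ) * α + (κ + 1) := by positivity
  rw [← Gamma_natCast_add_div_eq_multichoose fun i hi => by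
    linarith [(Nat.cast_nonneg i : (0 : ℝ) ≤ i)], rise,
    show ((a + 1 + m - a : ℤ) : ℝ) = m + 1 by push_cast; ring, add_assoc _ (κ : ℝ),
    show (m : ℝ) + 1 + (j * α + (κ + 1) - 1) = m + (j * α + (κ + 1)) by ring, mul_div_assoc,
    div_div, mul_comm (Real.Gamma (m + 1))]

theorem MLext_eq_multichoose_add {α : ℝ} (hα : 0 ≤ α) (κ : ℕ) {lam : ℝ} (hlam : |lam| < 1)
    (a k : ℤ) :
    MLext α κ lam a k = Ring.multichoose ((k : ℝ) - a) κ +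
      lam * zeroExtend a (mlSeries α lam (α + (κ + 1))) k := by
  rcases lt_or_ge a k with hk | hk
  · obtain ⟨m, rfl⟩ := Int.le.dest (Int.add_one_le_of_lt hk)
    rw [MLext_add_one_add_natCast hα, zeroExtend_add_one_add_natCast,
      mlSeries_eq_multichoose_add hlam, multichoose_natCast_add_one_comm]
    congr 2
    push_cast
    ring
  · rw [MLext, if_neg (by omega), zeroExtend_of_le hk, mul_zero, add_zero, multichoose_eq_prod_div]

theorem bdiff_MLext {α : ℝ} (hα : 0 ≤ α) {κ n : ℕ} (hκ : κ < n) {lam : ℝ} (hlam : |lam| < 1)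
    (a : ℤ) (m : ℕ) :
    bdiff n (MLext α κ lam a) (a + 1 + m) = lam * mlSeries α lam (α + (κ + 1) + -n) m := by
  have hpoly : bdiff n (fun k => Ring.multichoose ((k : ℝ) - a) κ) (a + 1 + m) = 0 := by
    have hdeg : ((multichoosePoly ℝ κ).comp (X - C (a : ℝ))).natDegree < n := by
      rwa [natDegree_comp, natDegree_X_sub_C, mul_one, natDegree_multichoosePoly]
    simpa only [eval_comp, eval_sub, eval_X, eval_C, eval_multichoosePoly] using
      bdiff_eval_eq_zero hdeg (a + 1 + m)
  rw [funext (MLext_eq_multichoose_add hα κ hlam a), bdiff_add_const_mul, hpoly, zero_add,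
    bdiff_zeroExtend, nablaSum_mlSeries hlam]

end MittagLefflerFunction

theorem caputo_discML_general (a : ℤ) {n : ℕ} {α : ℝ} (hα : 0 ≤ α) (hαn : α < n) {κ : ℕ}
    (hκ : κ < n) {lam : ℝ} (hlam : |lam| < 1) {k : ℤ} (hk : a + 1 ≤ k) :
    caputo a α n (MLext α κ lam a) k = lam * MLext α κ lam a k := by
  obtain ⟨m, rfl⟩ := Int.le.dest hk
  have hγ (i : ℕ) : (n : ℝ) - α ≠ -i := by
    linarith [(Nat.cast_nonneg i : (0 : ℝ) ≤ i)]
  calc caputo a α n (MLext α κ lam a) (a + 1 + m)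
      = nablaSum (n - α) (fun l => lam * mlSeries α lam (α + (κ + 1) + -n) l) m := by
        simp only [caputo, nsum_add_one_add_natCast hγ, bdiff_MLext hα hκ hlam]
    _ = lam * mlSeries α lam (α + (κ + 1) + -n + (n - α)) m := by
        rw [nablaSum_const_mul, nablaSum_mlSeries hlam]
    _ = lam * mlSeries α lam (κ + 1) m := by ring_nf
    _ = lam * MLext α κ lam a (a + 1 + m) := by rw [MLext_add_one_add_natCast hα]

/-- for `n-1 < α < n`, `κ ∈ ℕ` with `κ < n` and `|λ| < 1`, the
discrete Mittag–Leffler function (extended below `a` as above) is an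
eigenfunction of the nabla Caputo fractional difference:
`ₐ∇ₖ^α F_{α,κ+1}(λ,k,a) = λ·F_{α,κ+1}(λ,k,a)` for every `k ∈ ℕ_{a+1}`. -/
theorem caputo_discML (a : ℤ) (n : ℕ) (hn : 0 < n) (α : ℝ)
    (hα1 : (n : ℝ) - 1 < α) (hα2 : α < n) (κ : ℕ) (hκ : κ < n)
    (lam : ℝ) (hlam : |lam| < 1) (k : ℤ) (hk : a + 1 ≤ k) :
    caputo a α n (fun j => MLext α κ lam a j) k = lam * MLext α κ lam a k := by
  have hn1 : (1 : ℝ) ≤ n := by exact_mod_cast hn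
  exact caputo_discML_general a (by linarith) hα2 hκ hlam hk
end

section
/- Let a ∈ ℤ, α > 0, and let λ be a real number with λ ≠ 1. If ε : ℕ_{a+1} → ℝ satisfies ε(k) = λ · ∑_{j=0}^{k-a-1} [Γ(j+α)/(Γ(α)·Γ(j+1))] · ε(k-j) for every k ∈ ℕ_{a+1} (i.e., ε(k) = λ·ₐ∇ₖ^{-α}ε(k)), then ε(k) = 0 for every k ∈ ℕ_{a+1}. Consequently, the solution of the nabla fractional difference equation ₐ∇ₖ^α y(k) = λy(k) + u(k) with prescribed initial conditions ∇^κ y(a) = b_κ (κ = 0, …, n-1) is unique. -/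
/-!
The operators `nsum` and `bdiff` are lower triangular with unit diagonal: the weight at `j = 0` is
`Γ(γ) / (Γ(γ) Γ(1)) = 1` for the former and `C(n, 0) = 1` for the latter. Hence each of them, and
their composite `caputo`, returns `f k` at a point `k` as soon as `f` vanishes at all the earlier
points it sees. The homogeneous equation then reads `f k = λ f k` at the first point where `f` might
be nonzero, so `λ ≠ 1` forces `f` to vanish there as well. For the difference equation this is
applied to the difference of two solutions, without inverting the Caputo difference; the induction
starts because vanishing initial differences at `a` are a triangular system, with diagonal entries
`±1`, in the values at `a, a - 1, …, a - n + 1`.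
-/

variable {a k : ℤ} {α γ : ℝ} {n : ℕ} {lam f : ℤ → ℝ}

lemma bdiff_sub (n : ℕ) (f g : ℤ → ℝ) : bdiff n (f - g) = bdiff n f - bdiff n g := by
  funext k
  simp [bdiff, mul_sub, Finset.sum_sub_distrib]

lemma nsum_sub (a : ℤ) (γ : ℝ) (f g : ℤ → ℝ) : nsum a γ (f - g) = nsum a γ f - nsum a γ g := by
  funext k
  simp [nsum, mul_sub, Finset.sum_sub_distrib]

lemma caputo_sub (a : ℤ) (α : ℝ) (n : ℕ) (f g : ℤ → ℝ) :
    caputo a α n (f - g) = caputo a α n f - caputo a α n g := by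
  funext k
  simp only [caputo, bdiff_sub, nsum_sub, Pi.sub_apply]

lemma nsum_eq_self_of_eq_zero (hγ : Real.Gamma γ ≠ 0) (hk : a + 1 ≤ k)
    (hf : ∀ m, a + 1 ≤ m → m < k → f m = 0) : nsum a γ f k = f k := by
  have hmem : 0 ∈ Finset.range (k - a).toNat := Finset.mem_range.2 (by omega)
  rw [nsum, Finset.sum_eq_single_of_mem 0 hmem]
  · simp [hγ]
  · intro j hj hj0
    rw [Finset.mem_range] at hj
    rw [hf (k - j) (by omega) (by omega), mul_zero]

lemma bdiff_eq_self_of_eq_zero (hf : ∀ m, k - n ≤ m → m < k → f m = 0) : bdiff n f k = f k := by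
  rw [bdiff, Finset.sum_eq_single_of_mem 0 (by simp)]
  · simp
  · intro j hj hj0
    rw [Finset.mem_range] at hj
    rw [hf (k - j) (by omega) (by omega), mul_zero]

lemma caputo_eq_self_of_eq_zero (hγ : Real.Gamma (n - α) ≠ 0) (hk : a + 1 ≤ k)
    (hf : ∀ m, a + 1 - n ≤ m → m < k → f m = 0) : caputo a α n f k = f k := by
  have hbdiff : ∀ m, a + 1 ≤ m → m ≤ k → bdiff n f m = f m := fun m hm hmk =>
    bdiff_eq_self_of_eq_zero fun i hi him => hf i (by omega) (by omega)
  have hzero : ∀ m, a + 1 ≤ m → m < k → bdiff n f m = 0 := fun m hm hmk =>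
    (hbdiff m hm hmk.le).trans (hf m (by omega) hmk)
  exact (nsum_eq_self_of_eq_zero hγ hk hzero).trans (hbdiff k hk le_rfl)

lemma eq_zero_of_bdiff_eq_zero (hf : ∀ κ < n, bdiff κ f a = 0) : ∀ j < n, f (a - j) = 0 := by
  intro j hj
  induction j using Nat.strong_induction_on with
  | _ j ih =>
    have hlast : bdiff j f a = (-1) ^ j * f (a - j) := by
      rw [bdiff, Finset.sum_range_succ, Finset.sum_eq_zero, zero_add, Nat.choose_self,
        Nat.cast_one, mul_one]
      intro i hi
      rw [Finset.mem_range] at hi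
      rw [ih i hi (hi.trans hj), mul_zero]
    simpa [hlast] using hf j hj

lemma eq_zero_of_eq_mul_nsum (hγ : Real.Gamma γ ≠ 0) (hlam : ∀ k, a + 1 ≤ k → lam k ≠ 1)
    (hf : ∀ k, a + 1 ≤ k → f k = lam k * nsum a γ f k) : ∀ k, a + 1 ≤ k → f k = 0 := by
  intro k hk
  induction k using Int.strongRec (m := a + 1) with
  | lt k hlt => omega
  | ge k _ ih =>
    have hself : nsum a γ f k = f k :=
      nsum_eq_self_of_eq_zero hγ hk fun m hm hmk => ih m hmk hm
    have hmul : lam k * f k = f k := by simpa only [hself] using (hf k hk).symm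
    exact eq_zero_of_mul_eq_self_left (hlam k hk) hmul

lemma eq_zero_of_caputo_eq_mul (hγ : Real.Gamma (n - α) ≠ 0)
    (hlam : ∀ k, a + 1 ≤ k → lam k ≠ 1) (hf : ∀ k, a + 1 ≤ k → caputo a α n f k = lam k * f k)
    (hinit : ∀ κ < n, bdiff κ f a = 0) : ∀ k, a + 1 - n ≤ k → f k = 0 := by
  intro k hk
  induction k using Int.strongRec (m := a + 1) with
  | lt k hlt =>
    obtain ⟨j, rfl⟩ : ∃ j : ℕ, k = a - j := ⟨(a - k).toNat, by omega⟩
    exact eq_zero_of_bdiff_eq_zero hinit j (by omega)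
  | ge k hge ih =>
    have hself : caputo a α n f k = f k :=
      caputo_eq_self_of_eq_zero hγ hge fun m hm hmk => ih m hmk hm
    exact eq_zero_of_mul_eq_self_left (hlam k hge) ((hf k hge).symm.trans hself)

/-- `Real.Gamma` takes the junk value `0` exactly at the poles of `Γ`, so the conditions
`Real.Gamma _ ≠ 0` say that the weights of the fractional sums are defined. -/
theorem nabla_solution_unique_general (a : ℤ) (α : ℝ) (lam : ℤ → ℝ)
    (hlam : ∀ k, a + 1 ≤ k → lam k ≠ 1) :
    (Real.Gamma α ≠ 0 → ∀ ε : ℤ → ℝ, (∀ k, a + 1 ≤ k → ε k = lam k * nsum a α ε k) →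
      ∀ k, a + 1 ≤ k → ε k = 0) ∧
    (∀ n : ℕ, Real.Gamma (n - α) ≠ 0 →
      ∀ (u : ℤ → ℝ) (b : ℕ → ℝ) (y z : ℤ → ℝ),
        (∀ k, a + 1 ≤ k → caputo a α n y k = lam k * y k + u k) →
        (∀ k, a + 1 ≤ k → caputo a α n z k = lam k * z k + u k) →
        (∀ κ < n, bdiff κ y a = b κ) →
        (∀ κ < n, bdiff κ z a = b κ) →
        ∀ k, a + 1 - n ≤ k → y k = z k) := by
  refine ⟨fun hα ε hε => eq_zero_of_eq_mul_nsum hα hlam hε, ?_⟩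
  intro n hγ u b y z hy hz hby hbz k hk
  have heq : ∀ k, a + 1 ≤ k → caputo a α n (y - z) k = lam k * (y - z) k := fun k hk => by
    rw [caputo_sub, Pi.sub_apply, hy k hk, hz k hk, Pi.sub_apply]
    ring
  have hinit : ∀ κ < n, bdiff κ (y - z) a = 0 := fun κ hκ => by
    rw [bdiff_sub, Pi.sub_apply, hby κ hκ, hbz κ hκ, sub_self]
  exact sub_eq_zero.1 (eq_zero_of_caputo_eq_mul hγ hlam heq hinit k hk)

/-- for `α > 0` and `λ ≠ 1`, any `ε` with `ε(k) = λ·ₐ∇ₖ^{-α}ε(k)` on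
`ℕ_{a+1}` vanishes there; consequently, the solution of
`ₐ∇ₖ^α y(k) = λy(k) + u(k)` with prescribed initial conditions
`∇^κ y(a) = b_κ` (`κ = 0,…,n-1`) is unique. -/
theorem nabla_solution_unique (a : ℤ) (α : ℝ) (hα : 0 < α) (lam : ℝ) (hlam : lam ≠ 1) :
    (∀ ε : ℤ → ℝ, (∀ k : ℤ, a + 1 ≤ k → ε k = lam * nsum a α ε k) →
      ∀ k : ℤ, a + 1 ≤ k → ε k = 0) ∧
    (∀ n : ℕ, 0 < n → (n : ℝ) - 1 < α → α < n →
      ∀ (u : ℤ → ℝ) (b : ℕ → ℝ) (y z : ℤ → ℝ),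
        (∀ k : ℤ, a + 1 ≤ k → caputo a α n y k = lam * y k + u k) →
        (∀ k : ℤ, a + 1 ≤ k → caputo a α n z k = lam * z k + u k) →
        (∀ κ : ℕ, κ < n → bdiff κ y a = b κ) →
        (∀ κ : ℕ, κ < n → bdiff κ z a = b κ) →
        ∀ k : ℤ, a + 1 ≤ k → y k = z k) := by
  obtain ⟨hsum, hdiff⟩ := nabla_solution_unique_general a α (fun _ => lam) fun _ _ => hlam
  refine ⟨hsum (Real.Gamma_pos_of_pos hα).ne', fun n _ _ hαn u b y z hy hz hby hbz k hk => ?_⟩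
  exact hdiff n (Real.Gamma_pos_of_pos (sub_pos.2 hαn)).ne' u b y z hy hz hby hbz k (by omega)
end

section
/- Let a ∈ ℤ, let n be a positive integer and n-1 < α < n, let λ be a real number with |λ| < 1, and let u : ℕ_{a+1} → ℝ. Define y(k) = ∑_{τ=a+1}^{k} F_{α,α}(λ,τ,a)·u(k-τ+a+1) for k ≥ a+1, and y(k) = 0 for k ≤ a. Then y satisfies the zero initial conditions ∇^κ y(a) = 0 for κ = 0, 1, …, n-1, and the forced nabla fractional difference equation ₐ∇ₖ^α y(k) = λ·y(k) + u(k) for every k ∈ ℕ_{a+1}. -/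
open Finset PowerSeries

section NegBinomialSeries

variable {R : Type*} [CommRing R] [BinomialRing R]

/-- The formal power series `(1 - X)^(-s)` for an exponent `s` in a binomial ring, obtained from
`(1 + X)^(-s)` by substituting `-X`. It is the generating function of the weights of the nabla
fractional sum of order `s`. -/
noncomputable def negBinomialSeries (s : R) : R⟦X⟧ := rescale (-1 : R) (binomialSeries R (-s))

lemma negBinomialSeries_zero : negBinomialSeries (0 : R) = 1 := by
  simp [negBinomialSeries]

lemma negBinomialSeries_add (s t : R) :
    negBinomialSeries (s + t) = negBinomialSeries s * negBinomialSeries t := by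
  rw [negBinomialSeries, neg_add, binomialSeries_add, map_mul, negBinomialSeries,
    negBinomialSeries]

lemma coeff_negBinomialSeries (s : R) (m : ℕ) :
    coeff m (negBinomialSeries s) = (-1) ^ m * Ring.choose (-s) m := by
  simp [negBinomialSeries, coeff_rescale]

lemma coeff_negBinomialSeries_eq_multichoose (s : R) (m : ℕ) :
    coeff m (negBinomialSeries s) = Ring.multichoose s m := by
  rw [coeff_negBinomialSeries, Ring.choose_neg, ← Ring.multichoose_eq, Units.smul_def,
    zsmul_eq_mul, Int.cast_negOnePow_natCast, ← mul_assoc, ← mul_pow, neg_one_mul, neg_neg,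
    one_pow, one_mul]

lemma coeff_negBinomialSeries_neg_natCast (n m : ℕ) :
    coeff m (negBinomialSeries (-(n : R))) = (-1) ^ m * (n.choose m : R) := by
  rw [coeff_negBinomialSeries, neg_neg, Ring.choose_natCast]

end NegBinomialSeries

lemma coeff_negBinomialSeries_eq_ascPochhammer {K : Type*} [Field K] [CharZero K] [BinomialRing K]
    (s : K) (m : ℕ) :
    coeff m (negBinomialSeries s) = (ascPochhammer K m).eval s / (m.factorial : K) := by
  rw [coeff_negBinomialSeries_eq_multichoose,
    eq_div_iff (Nat.cast_ne_zero.mpr m.factorial_ne_zero), mul_comm, ← nsmul_eq_mul,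
    Ring.factorial_nsmul_multichoose_eq_ascPochhammer, Polynomial.ascPochhammer_smeval_eq_eval]

lemma ne_neg_natCast_of_pos {x : ℝ} (hx : 0 < x) (m : ℕ) : x ≠ -m :=
  ((neg_nonpos.mpr m.cast_nonneg).trans_lt hx).ne'

lemma real_Gamma_add_nat_div_Gamma_eq {s : ℝ} (hs : ∀ m : ℕ, s ≠ -m) (m : ℕ) :
    Real.Gamma (s + m) / Real.Gamma s = (ascPochhammer ℝ m).eval s := by
  have h := Complex.Gamma_add_nat_div_Gamma_eq (n := m) (s : ℂ) fun k => by exact_mod_cast hs k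
  rw [← ascPochhammer_map Complex.ofRealHom, Polynomial.eval_map,
    ← Complex.ofRealHom_eq_coe, Polynomial.eval₂_at_apply] at h
  simp only [Complex.ofRealHom_eq_coe] at h
  rw [← Complex.ofReal_natCast, ← Complex.ofReal_add, Complex.Gamma_ofReal,
    Complex.Gamma_ofReal] at h
  exact_mod_cast h

lemma coeff_negBinomialSeries_eq_Gamma {s : ℝ} (hs : ∀ m : ℕ, s ≠ -m) (m : ℕ) :
    coeff m (negBinomialSeries s) =
      Real.Gamma (m + s) / (Real.Gamma s * Real.Gamma (m + 1)) := by
  rw [coeff_negBinomialSeries_eq_ascPochhammer, ← real_Gamma_add_nat_div_Gamma_eq hs,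
    Real.Gamma_nat_eq_factorial, div_div, add_comm]

lemma summable_pow_mul_polynomial_eval {R : Type*} [NormedCommRing R] [CompleteSpace R]
    {r : R} (hr : ‖r‖ < 1) (q : Polynomial R) :
    Summable fun j : ℕ => r ^ j * q.eval (j : R) := by
  simp only [Polynomial.eval_eq_sum_range, mul_sum]
  refine summable_sum fun i _ => ?_
  exact ((summable_pow_mul_geometric_of_norm_lt_one i hr).mul_left (q.coeff i)).congr
    fun j => by ring

section MittagLefflerSeries

open scoped PowerSeries.WithPiTopology

variable {K : Type*} [NormedField K] [BinomialRing K]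

/-- The formal power series `∑ⱼ λ^j (1 - X)^(-(jα+β))`, summed coefficientwise. It is the
generating function of `F_{α,β}(λ,·,a)`. -/
noncomputable def mittagLefflerSeries (α β lam : K) : K⟦X⟧ :=
  ∑' j : ℕ, C (lam ^ j) * negBinomialSeries ((j : K) * α + β)

variable [CharZero K] [CompleteSpace K]

-- The `m`-th coefficient of `(1 - X)^(-s)` is a polynomial in `s`, so `|λ| < 1` suffices.
lemma summable_mittagLefflerSeries (α β : K) {lam : K} (hlam : ‖lam‖ < 1) :
    Summable fun j : ℕ => C (lam ^ j) * negBinomialSeries ((j : K) * α + β) := by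
  refine (WithPiTopology.summable_iff_summable_coeff K).mpr fun m => ?_
  let q : Polynomial K :=
    (ascPochhammer K m).comp (Polynomial.X * Polynomial.C α + Polynomial.C β)
  refine ((summable_pow_mul_polynomial_eval hlam q).mul_right (m.factorial : K)⁻¹).congr
    fun j => ?_
  rw [coeff_C_mul, coeff_negBinomialSeries_eq_ascPochhammer, div_eq_mul_inv, mul_assoc]
  simp [q, Polynomial.eval_comp, mul_comm α]

lemma coeff_mittagLefflerSeries (α β : K) {lam : K} (hlam : ‖lam‖ < 1) (m : ℕ) :
    coeff m (mittagLefflerSeries α β lam) =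
      ∑' j : ℕ, lam ^ j * coeff m (negBinomialSeries ((j : K) * α + β)) := by
  have hcoeff := (WithPiTopology.hasSum_iff_hasSum_coeff K).mp
    (summable_mittagLefflerSeries α β hlam).hasSum m
  simpa only [coeff_C_mul, mittagLefflerSeries] using hcoeff.tsum_eq.symm

lemma negBinomialSeries_mul_mittagLefflerSeries (α β γ : K) {lam : K} (hlam : ‖lam‖ < 1) :
    negBinomialSeries γ * mittagLefflerSeries α β lam = mittagLefflerSeries α (β + γ) lam := by
  rw [mittagLefflerSeries, ← (summable_mittagLefflerSeries α β hlam).tsum_mul_left,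
    mittagLefflerSeries]
  refine tsum_congr fun j => ?_
  rw [← add_assoc, negBinomialSeries_add _ γ]
  ring

lemma mittagLefflerSeries_eq_add (α β : K) {lam : K} (hlam : ‖lam‖ < 1) :
    mittagLefflerSeries α β lam =
      negBinomialSeries β + C lam * mittagLefflerSeries α (β + α) lam := by
  rw [mittagLefflerSeries, (summable_mittagLefflerSeries α β hlam).tsum_eq_zero_add,
    mittagLefflerSeries, ← (summable_mittagLefflerSeries α (β + α) hlam).tsum_mul_left]
  congr 1
  · simp
  · refine tsum_congr fun j => ?_
    rw [pow_succ', map_mul, mul_assoc, Nat.cast_add_one, add_one_mul, add_assoc, add_comm α]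

lemma negBinomialSeries_neg_mul_mittagLefflerSeries_self (α : K) {lam : K} (hlam : ‖lam‖ < 1) :
    negBinomialSeries (-α) * mittagLefflerSeries α α lam =
      1 + C lam * mittagLefflerSeries α α lam := by
  rw [negBinomialSeries_mul_mittagLefflerSeries α α _ hlam, add_neg_cancel,
    mittagLefflerSeries_eq_add α 0 hlam, negBinomialSeries_zero, zero_add]

end MittagLefflerSeries

section GeneratingFunction

variable {R : Type*}

/-- The generating function `∑ₘ f(a+1+m) Xᵐ` of the restriction of `f` to `ℕ_{a+1}`; the values
of `f` up to `a` are discarded. -/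
def genFun (a : ℤ) (f : ℤ → R) : R⟦X⟧ := mk fun m => f (a + 1 + m)

variable [Semiring R]

lemma coeff_genFun (a : ℤ) (f : ℤ → R) (m : ℕ) : coeff m (genFun a f) = f (a + 1 + m) :=
  coeff_mk m _

lemma coeff_mul_genFun (a : ℤ) (p : R⟦X⟧) (f : ℤ → R) (m : ℕ) :
    coeff m (p * genFun a f) = ∑ j ∈ range (m + 1), coeff j p * f (a + 1 + m - j) := by
  rw [coeff_mul, Nat.sum_antidiagonal_eq_sum_range_succ_mk]
  refine sum_congr rfl fun j hj => ?_
  rw [coeff_genFun, Nat.cast_sub (mem_range_succ_iff.mp hj), add_sub_assoc]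

lemma genFun_eq_mul_of_convolution {a : ℤ} {p : R⟦X⟧} {f g : ℤ → R}
    (h : ∀ k, a + 1 ≤ k → g k = ∑ j ∈ range (k - a).toNat, coeff j p * f (k - j)) :
    genFun a g = p * genFun a f := by
  ext m
  rw [coeff_mul_genFun, coeff_genFun, h _ (by lia), show (a + 1 + m - a).toNat = m + 1 by lia]

end GeneratingFunction

lemma genFun_discML {α β lam : ℝ} (hαβ : ∀ j m : ℕ, (j : ℝ) * α + β ≠ -m) (hlam : |lam| < 1)
    (a : ℤ) : genFun a (fun k => discML α β lam k a) = mittagLefflerSeries α β lam := by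
  ext m
  rw [coeff_genFun, coeff_mittagLefflerSeries α β hlam, discML]
  refine tsum_congr fun j => ?_
  have hbase : ((a + 1 + m - a : ℤ) : ℝ) = m + 1 := by push_cast; ring
  have hexp : (m : ℝ) + 1 + (j * α + β - 1) = m + (j * α + β) := by ring
  rw [rise, hbase, hexp, coeff_negBinomialSeries_eq_Gamma (hαβ j), mul_div_assoc, div_div,
    mul_comm (Real.Gamma (m + 1))]

lemma genFun_nsum {γ : ℝ} (hγ : ∀ m : ℕ, γ ≠ -m) (a : ℤ) (f : ℤ → ℝ) :
    genFun a (nsum a γ f) = negBinomialSeries γ * genFun a f :=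
  genFun_eq_mul_of_convolution fun k _ => by
    simp only [nsum, coeff_negBinomialSeries_eq_Gamma hγ]

section VanishingUpTo

variable {a : ℤ} {f : ℤ → ℝ}

lemma bdiff_eq_zero_of_forall_le (hf : ∀ k ≤ a, f k = 0) (n : ℕ) : bdiff n f a = 0 :=
  sum_eq_zero fun j _ => by rw [hf _ (by lia), mul_zero]

lemma genFun_bdiff (hf : ∀ k ≤ a, f k = 0) (n : ℕ) :
    genFun a (bdiff n f) = negBinomialSeries (-(n : ℝ)) * genFun a f := by
  ext m
  simp only [coeff_mul_genFun, coeff_genFun, bdiff, coeff_negBinomialSeries_neg_natCast]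
  -- Both sums extend to `range (n + m + 1)`: the binomial coefficient vanishes for `j > n`,
  -- and `f (a + 1 + m - j)` vanishes for `j > m`.
  rw [sum_subset (range_mono (show n + 1 ≤ n + m + 1 by lia)),
    sum_subset (range_mono (show m + 1 ≤ n + m + 1 by lia))]
  · intro j _ hj
    rw [hf _ (by grind), mul_zero]
  · intro j _ hj
    rw [Nat.choose_eq_zero_of_lt (by grind), Nat.cast_zero, mul_zero, zero_mul]

lemma genFun_caputo (hf : ∀ k ≤ a, f k = 0) {α : ℝ} {n : ℕ} (hα : ∀ m : ℕ, (n : ℝ) - α ≠ -m) :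
    genFun a (caputo a α n f) = negBinomialSeries (-α) * genFun a f := by
  have hcaputo : caputo a α n f = nsum a (n - α) (bdiff n f) := rfl
  rw [hcaputo, genFun_nsum hα, genFun_bdiff hf, ← mul_assoc, ← negBinomialSeries_add,
    show (n : ℝ) - α + -n = -α by ring]

end VanishingUpTo

/-- `hα` and `hnα` exclude the poles of `Real.Gamma`, where its value is `0` by convention. For
`n = 0` the operator is the Riemann–Liouville difference of order `α`. -/
theorem forced_response_general (a : ℤ) (n : ℕ) (α : ℝ)
    (hα : ∀ j m : ℕ, (j : ℝ) * α + α ≠ -m) (hnα : ∀ m : ℕ, (n : ℝ) - α ≠ -m)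
    (lam : ℝ) (hlam : |lam| < 1) (u : ℤ → ℝ) (y : ℤ → ℝ)
    (hy1 : ∀ k : ℤ, a + 1 ≤ k →
      y k = ∑ j ∈ Finset.range (k - a).toNat, discML α α lam (a + 1 + j) a * u (k - j))
    (hy2 : ∀ k : ℤ, k ≤ a → y k = 0) :
    (∀ κ : ℕ, bdiff κ y a = 0) ∧
    (∀ k : ℤ, a + 1 ≤ k → caputo a α n y k = lam * y k + u k) := by
  refine ⟨bdiff_eq_zero_of_forall_le hy2, fun k hk => ?_⟩
  have hy : genFun a y = mittagLefflerSeries α α lam * genFun a u := by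
    rw [← genFun_discML hα hlam a]
    exact genFun_eq_mul_of_convolution fun k hk => by simp only [hy1 k hk, coeff_genFun]
  have hequation : genFun a (caputo a α n y) = C lam * genFun a y + genFun a u := by
    rw [genFun_caputo hy2 hnα, hy, ← mul_assoc,
      negBinomialSeries_neg_mul_mittagLefflerSeries_self α hlam]
    ring
  obtain ⟨m, rfl⟩ := Int.le.dest hk
  simpa only [map_add, coeff_C_mul, coeff_genFun] using congrArg (coeff m) hequation

/-- forced response with zero initial conditions: for `n-1 < α < n`
and `|λ| < 1`, the function `y` given by the convolution
`y(k) = ∑_{τ=a+1}^{k} F_{α,α}(λ,τ,a) u(k-τ+a+1)` for `k ≥ a+1` (here `τ = a+1+j`)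
and `y(k) = 0` for `k ≤ a`, satisfies `∇^κ y(a) = 0` (`κ = 0,…,n-1`) and
`ₐ∇ₖ^α y(k) = λ y(k) + u(k)` for every `k ∈ ℕ_{a+1}`. -/
theorem forced_response (a : ℤ) (n : ℕ) (hn : 0 < n) (α : ℝ)
    (hα1 : (n : ℝ) - 1 < α) (hα2 : α < n) (lam : ℝ) (hlam : |lam| < 1)
    (u : ℤ → ℝ) (y : ℤ → ℝ)
    (hy1 : ∀ k : ℤ, a + 1 ≤ k →
      y k = ∑ j ∈ Finset.range (k - a).toNat, discML α α lam (a + 1 + j) a * u (k - j))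
    (hy2 : ∀ k : ℤ, k ≤ a → y k = 0) :
    (∀ κ : ℕ, κ < n → bdiff κ y a = 0) ∧
    (∀ k : ℤ, a + 1 ≤ k → caputo a α n y k = lam * y k + u k) := by
  have hα : 0 < α := lt_of_le_of_lt (sub_nonneg.mpr (by exact_mod_cast hn)) hα1
  have h := forced_response_general a n α (fun j => ne_neg_natCast_of_pos (by positivity))
    (ne_neg_natCast_of_pos (sub_pos.mpr hα2)) lam hlam u y hy1 hy2
  exact ⟨fun κ _ => h.1 κ, h.2⟩
end

section
/- Let a ∈ ℤ, let 0 < α ≤ 1, and let λ be a real number with -1 < λ < 0. Then the sequence k ↦ F_{α,1}(λ,k,a) is strictly decreasing on ℕ_{a+1} (i.e., F_{α,1}(λ,k+1,a) < F_{α,1}(λ,k,a) for all k ∈ ℕ_{a+1}) and converges to 0 as k → ∞. -/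
open Finset Filter Topology
open Ring (multichoose)

section Multichoose

variable {R : Type*} [Ring R] [BinomialRing R]

theorem multichoose_add_s14 {x y : R} (h : Commute x y) (n : ℕ) :
    multichoose (x + y) n = ∑ p ∈ antidiagonal n, multichoose x p.1 * multichoose y p.2 := by
  rw [← smul_left_cancel_iff (Int.negOnePow n), ← Ring.choose_neg', neg_add,
    Ring.add_choose_eq n h.neg_left.neg_right, smul_sum]
  refine sum_congr rfl fun p hp => ?_
  rw [Ring.choose_neg', Ring.choose_neg', smul_mul_smul_comm, ← Int.negOnePow_add,
    ← mem_antidiagonal.1 hp, Nat.cast_add]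

theorem sum_antidiagonal_multichoose_fst (x : R) (n : ℕ) :
    ∑ p ∈ antidiagonal n, multichoose x p.1 = multichoose (x + 1) n := by
  simp only [multichoose_add_s14 (Commute.one_right x), Ring.multichoose_one, mul_one]

theorem factorial_mul_multichoose_s14 (x : R) (n : ℕ) :
    (n.factorial : R) * multichoose x n = (ascPochhammer R n).eval x := by
  rw [← nsmul_eq_mul, Ring.factorial_nsmul_multichoose_eq_ascPochhammer,
    Polynomial.ascPochhammer_smeval_eq_eval]

theorem succ_mul_multichoose_succ (x : R) (n : ℕ) :
    ((n : R) + 1) * multichoose x (n + 1) = multichoose x n * (x + n) := by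
  have : IsAddTorsionFree R := BinomialRing.toIsAddTorsionFree
  rw [← nsmul_right_inj n.factorial_ne_zero, nsmul_eq_mul, nsmul_eq_mul]
  calc (n.factorial : R) * ((n + 1) * multichoose x (n + 1))
      = (n + 1).factorial * multichoose x (n + 1) := by
        rw [← mul_assoc, ← Nat.cast_succ, ← Nat.cast_mul, mul_comm, Nat.factorial_succ]
    _ = (n.factorial * multichoose x n) * (x + n) := by
        rw [factorial_mul_multichoose_s14, factorial_mul_multichoose_s14, ascPochhammer_succ_eval]
    _ = n.factorial * (multichoose x n * (x + n)) := mul_assoc _ _ _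

section Ordered

variable [LinearOrder R] [IsStrictOrderedRing R]

theorem multichoose_nonneg {x : R} (hx : 0 ≤ x) (n : ℕ) : 0 ≤ multichoose x n := by
  induction n with
  | zero => simp
  | succ n ih =>
    refine nonneg_of_mul_nonneg_right (a := (n : R) + 1) ?_ (by positivity)
    rw [succ_mul_multichoose_succ]
    positivity

theorem multichoose_neg_succ_nonpos {x : R} (h0 : 0 ≤ x) (h1 : x ≤ 1) (n : ℕ) :
    multichoose (-x) (n + 1) ≤ 0 := by
  induction n with
  | zero => simpa using h0
  | succ n ih =>
    refine nonpos_of_mul_nonpos_right (a := ((n + 1 : ℕ) : R) + 1) ?_ (by positivity)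
    rw [succ_mul_multichoose_succ]
    refine mul_nonpos_of_nonpos_of_nonneg ih ?_
    rw [neg_add_eq_sub, sub_nonneg, Nat.cast_succ]
    exact h1.trans (le_add_of_nonneg_left n.cast_nonneg)

end Ordered

theorem one_add_mul_sum_le_multichoose {K : Type*} [Field K] [LinearOrder K]
    [IsStrictOrderedRing K] [BinomialRing K] {x : K} (hx : 0 ≤ x) (n : ℕ) :
    1 + x * ∑ i ∈ range n, 1 / ((i : K) + 1) ≤ multichoose (x + 1) n := by
  induction n with
  | zero => simp
  | succ n ih =>
    have one_le : 1 ≤ multichoose (x + 1) n := (le_add_of_nonneg_right (by positivity)).trans ih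
    have ratio : multichoose (x + 1) (n + 1) =
        multichoose (x + 1) n + x * (1 / ((n : K) + 1)) * multichoose (x + 1) n := by
      have := succ_mul_multichoose_succ (x + 1) n
      field_simp
      linear_combination this
    rw [sum_range_succ, mul_add, ← add_assoc, ratio]
    exact add_le_add ih (le_mul_of_one_le_right (by positivity) one_le)

theorem tendsto_multichoose_add_one_atTop {x : ℝ} (hx : 0 < x) :
    Tendsto (multichoose (x + 1)) atTop atTop :=
  tendsto_atTop_mono (one_add_mul_sum_le_multichoose hx.le) <|
    tendsto_atTop_add_const_left _ _ <|
      Real.tendsto_sum_range_one_div_nat_succ_atTop.const_mul_atTop hx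

theorem multichoose_eq_Gamma_div {x : ℝ} (hx : ∀ m : ℕ, x ≠ -m) (n : ℕ) :
    multichoose x n = Real.Gamma (x + n) / (Real.Gamma (n + 1) * Real.Gamma x) := by
  have hΓ : Real.Gamma x ≠ 0 := Real.Gamma_ne_zero hx
  induction n with
  | zero => simp [hΓ]
  | succ n ih =>
    have hn : (n : ℝ) + 1 ≠ 0 := by positivity
    have hxn : x + n ≠ 0 := fun h => hx n (eq_neg_of_add_eq_zero_left h)
    rw [Nat.cast_succ, ← add_assoc, Real.Gamma_add_one hxn, Real.Gamma_add_one hn, mul_assoc,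
      mul_div_mul_comm, ← ih, div_mul_eq_mul_div, eq_div_iff hn, mul_comm,
      succ_mul_multichoose_succ, mul_comm]

end Multichoose

theorem summable_eval_natCast_mul_pow {R : Type*} [NormedRing R] [HasSummableGeomSeries R]
    (P : Polynomial R) {r : R} (hr : ‖r‖ < 1) : Summable fun j : ℕ => P.eval (j : R) * r ^ j := by
  simp_rw [Polynomial.eval_eq_sum_range, sum_mul, mul_assoc]
  exact summable_sum fun i _ =>
    (summable_pow_mul_geometric_of_norm_lt_one i hr).mul_left (P.coeff i)

/-- The coefficient of `zⁿ` in `(1 - z)^(-s) / (1 - lam * (1 - z)^(-α))`, expanded as a geometric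
series in `lam`. In terms of it, the discrete Mittag-Leffler function with parameters `α, β` at
`a + 1 + n` is the case `s = β`. -/
noncomputable def mlCoeff {𝕜 : Type*} [NormedField 𝕜] [BinomialRing 𝕜] (α lam s : 𝕜) (n : ℕ) : 𝕜 :=
  ∑' j : ℕ, lam ^ j * multichoose (s + j * α) n

theorem discML_eq_mlCoeff {α β : ℝ} (hα : 0 ≤ α) (hβ : 0 < β) (lam : ℝ) (a : ℤ) (n : ℕ) :
    discML α β lam (a + 1 + n) a = mlCoeff α lam β n := by
  refine tsum_congr fun j => ?_
  have hpos : 0 < β + j * α := by positivity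
  have hne (m : ℕ) : β + j * α ≠ -m := ((neg_nonpos.2 m.cast_nonneg).trans_lt hpos).ne'
  have hk : ((a + 1 + n - a : ℤ) : ℝ) = n + 1 := by push_cast; ring
  have harg : (n : ℝ) + 1 + (j * α + β - 1) = β + j * α + n := by ring
  rw [rise, hk, harg, multichoose_eq_Gamma_div hne, mul_div_assoc, div_div,
    add_comm ((j : ℝ) * α) β]

namespace mlCoeff

section NormedField

variable {𝕜 : Type*} [NormedField 𝕜] [BinomialRing 𝕜] {lam : 𝕜}

theorem summable (α s : 𝕜) (h : ‖lam‖ < 1) (n : ℕ) :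
    Summable fun j : ℕ => lam ^ j * multichoose (s + j * α) n := by
  have : IsAddTorsionFree 𝕜 := BinomialRing.toIsAddTorsionFree
  have hn : (n.factorial : 𝕜) ≠ 0 := by
    rw [← nsmul_one]
    exact smul_ne_zero n.factorial_ne_zero one_ne_zero
  refine (summable_mul_left_iff hn).1 <| (summable_eval_natCast_mul_pow ((ascPochhammer 𝕜 n).comp
    (Polynomial.C s + Polynomial.X * Polynomial.C α)) h).congr fun j => ?_
  simp only [Polynomial.eval_comp, Polynomial.eval_add, Polynomial.eval_C, Polynomial.eval_mul,
    Polynomial.eval_X, ← factorial_mul_multichoose_s14]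
  ring

theorem eq_multichoose_add (α s : 𝕜) (h : ‖lam‖ < 1) (n : ℕ) :
    mlCoeff α lam s n = multichoose s n + lam * mlCoeff α lam (s + α) n := by
  unfold mlCoeff
  rw [(summable α s h n).tsum_eq_zero_add, ← tsum_mul_left]
  congr 1
  · simp
  · refine tsum_congr fun j => ?_
    rw [show s + ((j + 1 : ℕ) : 𝕜) * α = s + α + j * α by push_cast; ring, pow_succ']
    ring

theorem sum_multichoose_mul (α s t : 𝕜) (h : ‖lam‖ < 1) (n : ℕ) :
    ∑ p ∈ antidiagonal n, multichoose t p.1 * mlCoeff α lam s p.2 = mlCoeff α lam (s + t) n := by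
  have hsum (p : ℕ × ℕ) :
      Summable fun j : ℕ => multichoose t p.1 * (lam ^ j * multichoose (s + j * α) p.2) :=
    (summable α s h p.2).mul_left _
  simp_rw [mlCoeff, ← tsum_mul_left]
  rw [← Summable.tsum_finsetSum fun p _ => hsum p]
  refine tsum_congr fun j => ?_
  rw [show s + t + j * α = t + (s + j * α) by ring, multichoose_add_s14 (Commute.all _ _), mul_sum]
  exact sum_congr rfl fun p _ => mul_left_comm _ _ _

theorem add_one_succ (α s : 𝕜) (h : ‖lam‖ < 1) (n : ℕ) :
    mlCoeff α lam (s + 1) (n + 1) = mlCoeff α lam s (n + 1) + mlCoeff α lam (s + 1) n := by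
  unfold mlCoeff
  rw [← (summable α s h (n + 1)).tsum_add (summable α (s + 1) h n)]
  refine tsum_congr fun j => ?_
  rw [add_right_comm, Ring.multichoose_succ_succ, mul_add]

theorem at_one_succ (α : 𝕜) (h : ‖lam‖ < 1) (n : ℕ) :
    mlCoeff α lam 1 (n + 1) = mlCoeff α lam 1 n + lam * mlCoeff α lam α (n + 1) := by
  have hzero : mlCoeff α lam 0 (n + 1) = lam * mlCoeff α lam α (n + 1) := by
    rw [eq_multichoose_add α 0 h, Ring.multichoose_zero_succ, zero_add, zero_add]
  have hpascal := add_one_succ α 0 h n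
  rw [zero_add, hzero] at hpascal
  rw [hpascal, add_comm]

theorem one_sub_mul_apply_zero (α s : 𝕜) (h : ‖lam‖ < 1) : (1 - lam) * mlCoeff α lam s 0 = 1 := by
  have hconv := sum_multichoose_mul α s (-α) h 0
  rw [eq_multichoose_add α (s + -α) h, neg_add_cancel_right] at hconv
  simp only [Nat.antidiagonal_zero, sum_singleton, Ring.multichoose_zero_right, one_mul] at hconv
  linear_combination hconv

theorem one_sub_mul_apply_succ (α s : 𝕜) (h : ‖lam‖ < 1) (n : ℕ) :
    (1 - lam) * mlCoeff α lam s (n + 1) = multichoose (s - α) (n + 1) -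
      ∑ p ∈ antidiagonal n, multichoose (-α) (p.1 + 1) * mlCoeff α lam s p.2 := by
  have hconv := sum_multichoose_mul α s (-α) h (n + 1)
  rw [eq_multichoose_add α (s + -α) h, neg_add_cancel_right, ← sub_eq_add_neg,
    Nat.sum_antidiagonal_succ, Ring.multichoose_zero_right] at hconv
  linear_combination hconv

end NormedField

variable {α lam s t : ℝ}

theorem pos (hα0 : 0 < α) (hα1 : α ≤ 1) (h : |lam| < 1) (hs : α ≤ s) (n : ℕ) :
    0 < mlCoeff α lam s n := by
  have hsub : 0 < 1 - lam := sub_pos.2 (lt_of_abs_lt h)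
  induction n using Nat.strong_induction_on with
  | _ n ih =>
    refine pos_of_mul_pos_right (a := 1 - lam) ?_ hsub.le
    rcases n with _ | n
    · rw [one_sub_mul_apply_zero α s h]
      exact one_pos
    · rw [one_sub_mul_apply_succ α s h]
      have hsum : ∑ p ∈ antidiagonal n,
          multichoose (-α) (p.1 + 1) * mlCoeff α lam s p.2 < 0 := by
        refine sum_neg' (fun p hp => ?_) ⟨(0, n), by simp, ?_⟩
        · exact mul_nonpos_of_nonpos_of_nonneg (multichoose_neg_succ_nonpos hα0.le hα1 _)
            (ih _ (Nat.lt_succ_of_le (HasAntidiagonal.antidiagonal.snd_le hp))).le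
        · rw [zero_add, Ring.multichoose_one_right]
          exact mul_neg_of_neg_of_pos (neg_lt_zero.2 hα0) (ih n n.lt_succ_self)
      linarith [multichoose_nonneg (sub_nonneg.2 hs) (n + 1)]

theorem strictAnti_at_one (hα0 : 0 < α) (hα1 : α ≤ 1) (h : |lam| < 1) (hlam : lam < 0) :
    StrictAnti (mlCoeff α lam 1) := by
  refine strictAnti_nat_of_succ_lt fun n => ?_
  rw [at_one_succ α h, add_lt_iff_neg_left]
  exact mul_neg_of_neg_of_pos hlam (pos hα0 hα1 h le_rfl _)

theorem multichoose_mul_le (h : |lam| < 1) (ht : 0 ≤ t) (hanti : Antitone (mlCoeff α lam s))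
    (n : ℕ) : multichoose (t + 1) n * mlCoeff α lam s n ≤ mlCoeff α lam (s + t) n := by
  rw [← sum_multichoose_mul α s t h, ← sum_antidiagonal_multichoose_fst, sum_mul]
  gcongr with p hp
  · exact multichoose_nonneg ht _
  · exact hanti (HasAntidiagonal.antidiagonal.snd_le hp)

theorem at_one_le_inv (hα0 : 0 < α) (hα1 : α ≤ 1) (h : |lam| < 1) (hlam : lam < 0) (n : ℕ) :
    mlCoeff α lam 1 n ≤ (1 + -lam * multichoose (α + 1) n)⁻¹ := by
  have hpos : 0 < 1 + -lam * multichoose (α + 1) n :=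
    add_pos_of_pos_of_nonneg one_pos <|
      mul_nonneg (neg_pos.2 hlam).le (multichoose_nonneg (by positivity) n)
  have hconv := multichoose_mul_le h hα0.le (strictAnti_at_one hα0 hα1 h hlam).antitone n
  rw [← one_div, le_div_iff₀ hpos]
  calc mlCoeff α lam 1 n * (1 + -lam * multichoose (α + 1) n)
      = mlCoeff α lam 1 n + -lam * (multichoose (α + 1) n * mlCoeff α lam 1 n) := by ring
    _ ≤ mlCoeff α lam 1 n + -lam * mlCoeff α lam (1 + α) n := by
        gcongr
        exact (neg_pos.2 hlam).le
    _ = 1 := by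
        rw [eq_multichoose_add α 1 h, Ring.multichoose_one]
        ring

theorem tendsto_at_one_nhds_zero (hα0 : 0 < α) (hα1 : α ≤ 1) (h : |lam| < 1) (hlam : lam < 0) :
    Tendsto (mlCoeff α lam 1) atTop (𝓝 0) := by
  refine squeeze_zero (fun n => (pos hα0 hα1 h hα1 n).le)
    (at_one_le_inv hα0 hα1 h hlam) (tendsto_inv_atTop_zero.comp ?_)
  exact tendsto_atTop_add_const_left _ _ <|
    (tendsto_multichoose_add_one_atTop hα0).const_mul_atTop (neg_pos.2 hlam)

end mlCoeff

/-- for `0 < α ≤ 1` and `-1 < λ < 0`, the sequence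
`k ↦ F_{α,1}(λ,k,a)` is strictly decreasing on `ℕ_{a+1}` and converges to `0`. -/
theorem discML_monotone_convergent (a : ℤ) (α : ℝ) (hα0 : 0 < α) (hα1 : α ≤ 1)
    (lam : ℝ) (hlam0 : -1 < lam) (hlam1 : lam < 0) :
    (∀ k : ℤ, a + 1 ≤ k → discML α 1 lam (k + 1) a < discML α 1 lam k a) ∧
    Filter.Tendsto (fun k : ℕ => discML α 1 lam (a + 1 + k) a)
      Filter.atTop (nhds 0) := by
  have h : |lam| < 1 := abs_lt.2 ⟨hlam0, hlam1.trans one_pos⟩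
  have heq (n : ℕ) : discML α 1 lam (a + 1 + n) a = mlCoeff α lam 1 n :=
    discML_eq_mlCoeff hα0.le one_pos lam a n
  constructor
  · intro k hk
    obtain ⟨n, rfl⟩ := Int.le.dest hk
    rw [add_assoc (a + 1), ← Nat.cast_succ, heq, heq]
    exact mlCoeff.strictAnti_at_one hα0 hα1 h hlam1 n.lt_succ_self
  · simp_rw [heq]
    exact mlCoeff.tendsto_at_one_nhds_zero hα0 hα1 h hlam1
end

section
/- Let a ∈ ℤ, let 1 < α ≤ 2, and let λ be a real number with -1 < λ < 0. Then both F_{α,1}(λ,k,a) → 0 and F_{α,2}(λ,k,a) → 0 as k → ∞; that is, the zero-input response y(k) = b₀·F_{α,1}(λ,k,a) + b₁·F_{α,2}(λ,k,a) converges to 0 as k → ∞ for any b₀, b₁ ∈ ℝ. -/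
/-!
The sequence `F_{α,β}(λ, a + 1 + n, a)` has generating function
`∑ⱼ λʲ (1 - z)^(-jα - β) = (1 - z)^(α - β) / ((1 - z)^α - λ)`. For `z ≠ 1` in the closed unit disc,
`1 - z` has argument in `(-π/2, π/2)`, so for `α ≤ 2` the power `(1 - z)^α` avoids the negative
axis, and the denominator has no zero in the closed disc when `λ < 0`. The generating function is
thus `O(|1 - z|^(α - β))` on the disc; since `α - β > -1`, it is dominated on all circles
`|z| = r < 1` by a single integrable function of the angle. Letting `r → 1` in Cauchy's formula, its
Taylor coefficients are Fourier coefficients of an integrable function, which tend to zero by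
the Riemann–Lebesgue lemma.
-/

open Complex MeasureTheory Filter Topology Metric
open scoped Real ComplexOrder

section FourierCoeffOn

variable {E : Type*} [NormedAddCommGroup E] [NormedSpace ℂ E] {a b : ℝ}

lemma tendsto_fourierCoeffOn_cofinite (hab : a < b) (f : ℝ → E) :
    Tendsto (fourierCoeffOn hab f) cofinite (𝓝 0) := by
  have hfreq : Tendsto (fun n : ℤ => (n : ℝ) * (b - a)⁻¹) cofinite (cocompact ℝ) :=
    (tendsto_cocompact_mul_right₀ (inv_ne_zero (sub_pos.mpr hab).ne')).comp
      Int.tendsto_coe_cofinite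
  have hRL := (Real.tendsto_integral_exp_smul_cocompact ((Set.Ioc a b).indicator f)).comp hfreq
  rw [← smul_zero (1 / (b - a))]
  refine (hRL.const_smul (1 / (b - a))).congr fun n => ?_
  have hchar (θ : ℝ) : fourier (-n) (θ : AddCircle (b - a)) =
      (Real.fourierChar (-(θ * (n * (b - a)⁻¹))) : ℂ) := by
    rw [fourier_coe_apply, Real.fourierChar_apply]
    push_cast
    ring_nf
  rw [fourierCoeffOn_eq_integral, intervalIntegral.integral_of_le hab.le,
    ← integral_indicator measurableSet_Ioc]
  simp only [Function.comp_apply, hchar, Set.indicator_smul, Circle.smul_def]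

lemma norm_fourier_smul {T : ℝ} (n : ℤ) (x : AddCircle T) (v : E) : ‖fourier n x • v‖ = ‖v‖ := by
  rw [norm_smul, fourier_apply, Circle.norm_coe, one_mul]

lemma tendsto_fourierCoeffOn_of_dominated {ι : Type*} {l : Filter ι} [l.IsCountablyGenerated]
    (hab : a < b) {F : ι → ℝ → E} {f : ℝ → E} (bound : ℝ → ℝ)
    (hF : ∀ᶠ i in l, AEStronglyMeasurable (F i) (volume.restrict (Set.uIoc a b)))
    (hF_le : ∀ᶠ i in l, ∀ᵐ θ, θ ∈ Set.uIoc a b → ‖F i θ‖ ≤ bound θ)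
    (hbound : IntervalIntegrable bound volume a b)
    (hlim : ∀ᵐ θ, θ ∈ Set.uIoc a b → Tendsto (F · θ) l (𝓝 (f θ))) (n : ℤ) :
    Tendsto (fun i => fourierCoeffOn hab (F i) n) l (𝓝 (fourierCoeffOn hab f n)) := by
  simp only [fourierCoeffOn_eq_integral]
  refine (intervalIntegral.tendsto_integral_filter_of_dominated_convergence bound ?_ ?_ hbound
    ?_).const_smul _
  · filter_upwards [hF] with i hi
    exact AEStronglyMeasurable.smul (by fun_prop) hi
  · filter_upwards [hF_le] with i hi
    simpa only [norm_fourier_smul] using hi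
  · filter_upwards [hlim] with θ hθ hmem using (hθ hmem).const_smul _

lemma hasSum_fourierCoeffOn {ι : Type*} [Countable ι] (hab : a < b) {F : ι → ℝ → E}
    {f : ℝ → E} {u : ι → ℝ} (hu : Summable u)
    (hF : ∀ i, AEStronglyMeasurable (F i) (volume.restrict (Set.uIoc a b)))
    (hF_le : ∀ i θ, ‖F i θ‖ ≤ u i) (hf : ∀ θ, HasSum (F · θ) (f θ)) (n : ℤ) :
    HasSum (fun i => fourierCoeffOn hab (F i) n) (fourierCoeffOn hab f n) := by
  simp only [fourierCoeffOn_eq_integral]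
  exact (intervalIntegral.hasSum_integral_of_dominated_convergence
    (F := fun i θ => fourier (-n) (θ : AddCircle (b - a)) • F i θ) (fun i _ => u i)
    (fun i => AEStronglyMeasurable.smul (by fun_prop) (hF i))
    (fun i => ae_of_all _ fun θ _ => (norm_fourier_smul _ _ _).trans_le (hF_le i θ))
    (ae_of_all _ fun _ _ => hu) intervalIntegrable_const
    (ae_of_all _ fun θ _ => (hf θ).const_smul _)).const_smul _

end FourierCoeffOn

section TaylorCoefficients

lemma coeff_const_smul {𝕜 E : Type*} [NontriviallyNormedField 𝕜] [NormedAddCommGroup E]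
    [NormedSpace 𝕜 E] (a : 𝕜) (p : FormalMultilinearSeries 𝕜 𝕜 E) (n : ℕ) :
    (a • p).coeff n = a • p.coeff n :=
  rfl

lemma continuous_comp_circleMap {X : Type*} [TopologicalSpace X] {f : ℂ → X} {c : ℂ}
    {r R : ℝ} (hr : 0 ≤ r) (hrR : r < R) (hf : ContinuousOn f (ball c R)) :
    Continuous fun θ => f (circleMap c r θ) :=
  hf.comp_continuous (continuous_circleMap c r) fun θ =>
    closedBall_subset_ball hrR (circleMap_mem_closedBall c hr θ)

variable {E : Type*} [NormedAddCommGroup E] [NormedSpace ℂ E] [CompleteSpace E]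

lemma pow_smul_coeff_eq_fourierCoeffOn {f : ℂ → E} {p : FormalMultilinearSeries ℂ ℂ E} {c : ℂ}
    {r : ℝ} (hr : 0 < r) (hf : DifferentiableOn ℂ f (closedBall c r))
    (hp : HasFPowerSeriesAt f p c) (n : ℕ) :
    (r : ℂ) ^ n • p.coeff n =
      fourierCoeffOn (neg_lt_self Real.pi_pos) (fun θ => f (circleMap c r θ)) n := by
  have hcauchy : HasFPowerSeriesAt f (cauchyPowerSeries f c r) c := by
    lift r to NNReal using hr.le
    exact (hf.hasFPowerSeriesOnBall hr).hasFPowerSeriesAt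
  have hperiodic : Function.Periodic
      (fun θ => (r / (circleMap c r θ - c)) ^ n • f (circleMap c r θ)) (2 * π) :=
    (periodic_circleMap c r).comp fun z => (r / (z - c)) ^ n • f z
  have hshift := hperiodic.intervalIntegral_add_eq 0 (-π)
  calc (r : ℂ) ^ n • p.coeff n
      = (2 * π * I : ℂ)⁻¹ • ∮ z in C(c, r), (z - c)⁻¹ • (r / (z - c)) ^ n • f z := by
        rw [← FormalMultilinearSeries.apply_eq_pow_smul_coeff,
          hp.eq_formalMultilinearSeries hcauchy, cauchyPowerSeries_apply]
        simp only [smul_comm (_ ^ n)]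
    _ = (2 * π)⁻¹ • ∫ θ in -π..π, (r / (circleMap c r θ - c)) ^ n • f (circleMap c r θ) := by
        rw [← Real.circleAverage_eq_circleIntegral hr.ne', Real.circleAverage_def]
        rw [zero_add, show -π + 2 * π = π by ring] at hshift
        rw [hshift]
    _ = fourierCoeffOn (neg_lt_self Real.pi_pos) (fun θ => f (circleMap c r θ)) n := by
        rw [fourierCoeffOn_eq_integral, sub_neg_eq_add, ← two_mul, one_div]
        congr! 4 with θ
        have hr' : (r : ℂ) ≠ 0 := ofReal_ne_zero.mpr hr.ne'
        rw [fourier_coe_apply, circleMap_sub_center, circleMap_zero, div_mul_cancel_left₀ hr',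
          ← Complex.exp_neg, ← Complex.exp_nat_mul]
        have hpi : (π : ℂ) ≠ 0 := ofReal_ne_zero.mpr Real.pi_ne_zero
        congr 1
        push_cast
        field_simp

lemma hasSum_coeff {ι : Type*} [Countable ι] {f : ι → ℂ → E} {F : ℂ → E}
    {p : ι → FormalMultilinearSeries ℂ ℂ E} {P : FormalMultilinearSeries ℂ ℂ E} {c : ℂ}
    {u : ι → ℝ} (hu : Summable u) (hf : ∀ᶠ z in 𝓝 c, ∀ i, DifferentiableAt ℂ (f i) z)
    (hf_le : ∀ᶠ z in 𝓝 c, ∀ i, ‖f i z‖ ≤ u i) (hF : ∀ᶠ z in 𝓝 c, HasSum (f · z) (F z))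
    (hp : ∀ i, HasFPowerSeriesAt (f i) (p i) c) (hP : HasFPowerSeriesAt F P c) (n : ℕ) :
    HasSum (fun i => (p i).coeff n) (P.coeff n) := by
  obtain ⟨R, hR, hball⟩ := eventually_nhds_iff_ball.mp
    ((hf.and hf_le).and (hF.and hP.eventually_differentiableAt))
  have hr : 0 < R / 2 := half_pos hR
  have hrR : R / 2 < R := half_lt_self hR
  have hsub : closedBall c (R / 2) ⊆ ball c R := closedBall_subset_ball hrR
  have hcircle (θ : ℝ) : circleMap c (R / 2) θ ∈ ball c R :=
    hsub (circleMap_mem_closedBall c hr.le θ)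
  have hfd (i : ι) : DifferentiableOn ℂ (f i) (ball c R) := fun z hz =>
    ((hball z hz).1.1 i).differentiableWithinAt
  have hFd : DifferentiableOn ℂ F (ball c R) := fun z hz =>
    (hball z hz).2.2.differentiableWithinAt
  have hsum := hasSum_fourierCoeffOn (neg_lt_self Real.pi_pos) hu
    (fun i => (continuous_comp_circleMap hr.le hrR (hfd i).continuousOn).aestronglyMeasurable)
    (fun i θ => (hball _ (hcircle θ)).1.2 i) (fun θ => (hball _ (hcircle θ)).2.1) n
  simp only [← pow_smul_coeff_eq_fourierCoeffOn hr ((hfd _).mono hsub) (hp _),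
    ← pow_smul_coeff_eq_fourierCoeffOn hr (hFd.mono hsub) hP] at hsum
  have hrn : ((R / 2 : ℝ) : ℂ) ^ n ≠ 0 := pow_ne_zero n (ofReal_ne_zero.mpr hr.ne')
  simpa only [inv_smul_smul₀ hrn] using hsum.const_smul (((R / 2 : ℝ) : ℂ) ^ n)⁻¹

lemma tendsto_coeff_of_dominated_boundary {f : ℂ → E} {p : FormalMultilinearSeries ℂ ℂ E}
    {g : ℝ → E} {bound : ℝ → ℝ} {c : ℂ} {R : ℝ} (hR : 0 < R) (hf : DifferentiableOn ℂ f (ball c R))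
    (hp : HasFPowerSeriesAt f p c) (hbound : IntervalIntegrable bound volume (-π) π)
    (hf_le : ∀ r ∈ Set.Ioo 0 R, ∀ᵐ θ, θ ∈ Set.uIoc (-π) π → ‖f (circleMap c r θ)‖ ≤ bound θ)
    (hlim : ∀ᵐ θ, θ ∈ Set.uIoc (-π) π → Tendsto (fun r => f (circleMap c r θ)) (𝓝[<] R) (𝓝 (g θ))) :
    Tendsto (fun n => (R : ℂ) ^ n • p.coeff n) atTop (𝓝 0) := by
  have hpi := neg_lt_self Real.pi_pos
  have hr : ∀ᶠ r in 𝓝[<] R, r ∈ Set.Ioo 0 R := Ioo_mem_nhdsLT hR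
  have hcoeff (n : ℕ) : (R : ℂ) ^ n • p.coeff n = fourierCoeffOn hpi g n := by
    have hboundary := tendsto_fourierCoeffOn_of_dominated hpi bound
      (hr.mono fun r hr => (continuous_comp_circleMap hr.1.le hr.2
        hf.continuousOn).aestronglyMeasurable) (hr.mono hf_le) hbound hlim n
    have hinterior : Tendsto (fun r : ℝ => (r : ℂ) ^ n • p.coeff n) (𝓝[<] R)
        (𝓝 ((R : ℂ) ^ n • p.coeff n)) :=
      Continuous.tendsto (by fun_prop) R |>.mono_left nhdsWithin_le_nhds
    refine tendsto_nhds_unique (hinterior.congr' ?_) hboundary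
    filter_upwards [hr] with r hr using pow_smul_coeff_eq_fourierCoeffOn hr.1
      (hf.mono (closedBall_subset_ball hr.2)) hp n
  simp only [hcoeff]
  exact (tendsto_fourierCoeffOn_cofinite hpi g).comp
    (Nat.cofinite_eq_atTop ▸ Nat.cast_injective.tendsto_cofinite)

end TaylorCoefficients

section UnitDisc

lemma one_sub_re_pos {z : ℂ} (hz : ‖z‖ ≤ 1) (hz1 : z ≠ 1) : 0 < (1 - z).re := by
  rw [sub_re, one_re, sub_pos]
  refine ((re_le_norm z).trans hz).lt_of_ne fun hre => hz1 ?_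
  have hnorm : ‖z‖ = 1 := le_antisymm hz (hre.ge.trans (re_le_norm z))
  have hnonneg : 0 ≤ z := re_eq_norm.mp (hre.trans hnorm.symm)
  exact Complex.ext hre (nonneg_iff.mp hnonneg).2.symm

lemma cpow_mem_slitPlane {w : ℂ} {α : ℝ} (hw : 0 < w.re) (hα : |α| ≤ 2) :
    w ^ (α : ℂ) ∈ slitPlane := by
  have hw0 : w ≠ 0 := fun h => by simp [h] at hw
  have harg : |w.arg * α| < π := by
    have := abs_arg_lt_pi_div_two_iff.mpr (Or.inl hw)
    rw [abs_mul]
    nlinarith [abs_nonneg w.arg, Real.pi_pos]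
  have harg_cpow : (w ^ (α : ℂ)).arg = w.arg * α := by
    rw [cpow_ofReal, ofReal_cos, ofReal_sin, arg_mul_cos_add_sin_mul_I
      (Real.rpow_pos_of_pos (norm_pos_iff.mpr hw0) α) ⟨(abs_lt.mp harg).1, (abs_lt.mp harg).2.le⟩]
  exact mem_slitPlane_iff_arg.mpr
    ⟨harg_cpow ▸ (abs_lt.mp harg).2.ne, by simp [cpow_eq_zero_iff, hw0]⟩

lemma one_sub_cpow_ne_of_neg {α lam : ℝ} (hα0 : 0 < α) (hα2 : α ≤ 2) (hlam : lam < 0) {z : ℂ}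
    (hz : ‖z‖ ≤ 1) : (1 - z) ^ (α : ℂ) ≠ lam := by
  rcases eq_or_ne z 1 with rfl | hz1
  · rw [sub_self, zero_cpow (ofReal_ne_zero.mpr hα0.ne')]
    exact_mod_cast hlam.ne'
  · intro h
    have hslit := cpow_mem_slitPlane (one_sub_re_pos hz hz1) ((abs_of_pos hα0).trans_le hα2)
    rw [h, ofReal_mem_slitPlane] at hslit
    exact hslit.not_gt hlam

lemma norm_one_sub_le_two_mul {r : ℝ} (hr0 : 0 ≤ r) (hr1 : r ≤ 1) {u : ℂ} (hu : ‖u‖ = 1) :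
    ‖1 - u‖ ≤ 2 * ‖1 - r * u‖ := by
  have hradial : 1 - r ≤ ‖1 - r * u‖ := by
    simpa [hu, abs_of_nonneg hr0] using norm_sub_norm_le 1 ((r : ℂ) * u)
  calc ‖1 - u‖ = ‖(1 - r * u) - (1 - r : ℝ) * u‖ := by push_cast; ring_nf
    _ ≤ ‖1 - r * u‖ + ‖((1 - r : ℝ) : ℂ) * u‖ := norm_sub_le _ _
    _ = ‖1 - r * u‖ + (1 - r) := by
      rw [norm_mul, hu, mul_one, norm_real, Real.norm_of_nonneg (sub_nonneg.mpr hr1)]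
    _ ≤ 2 * ‖1 - r * u‖ := by linarith

lemma abs_div_pi_le_norm_one_sub_circleMap {r θ : ℝ} (hr0 : 0 ≤ r) (hr1 : r ≤ 1) (hθ : |θ| ≤ π) :
    |θ| / π ≤ ‖1 - circleMap 0 r θ‖ := by
  have hjordan : |θ| / π ≤ |Real.sin (θ / 2)| := by
    have := Real.mul_abs_le_abs_sin (x := θ / 2) (by rw [abs_div, abs_two]; gcongr)
    rwa [abs_div, abs_two, div_mul_div_cancel₀' two_ne_zero] at this
  have hchord : 2 * |Real.sin (θ / 2)| = ‖1 - exp (θ * I)‖ := by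
    rw [norm_sub_rev, mul_comm (θ : ℂ) I, norm_exp_I_mul_ofReal_sub_one, norm_mul, Real.norm_two,
      Real.norm_eq_abs]
  have hradial := norm_one_sub_le_two_mul hr0 hr1 (norm_exp_ofReal_mul_I θ)
  rw [circleMap_zero]
  linarith

lemma rpow_le_rpow_add_rpow {a x b : ℝ} (ha : 0 < a) (hax : a ≤ x) (hxb : x ≤ b) (p : ℝ) :
    x ^ p ≤ a ^ p + b ^ p := by
  have hx : 0 < x := ha.trans_le hax
  rcases le_total 0 p with hp | hp
  · exact (Real.rpow_le_rpow hx.le hxb hp).trans (le_add_of_nonneg_left (by positivity))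
  · exact (Real.rpow_le_rpow_of_nonpos ha hax hp).trans
      (le_add_of_nonneg_right (Real.rpow_nonneg (hx.le.trans hxb) p))

lemma norm_one_sub_circleMap_rpow_le {r θ : ℝ} (hr0 : 0 ≤ r) (hr1 : r ≤ 1) (hθ0 : θ ≠ 0)
    (hθ : |θ| ≤ π) (p : ℝ) : ‖1 - circleMap 0 r θ‖ ^ p ≤ (|θ| / π) ^ p + 2 ^ p := by
  refine rpow_le_rpow_add_rpow (by positivity) (abs_div_pi_le_norm_one_sub_circleMap hr0 hr1 hθ)
    ?_ p
  calc ‖1 - circleMap 0 r θ‖ ≤ ‖(1 : ℂ)‖ + ‖circleMap 0 r θ‖ := norm_sub_le _ _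
    _ ≤ 2 := by
      rw [norm_one, norm_circleMap_zero, abs_of_nonneg hr0]
      linarith

lemma circleMap_zero_one_ne_one {θ : ℝ} (hθ0 : θ ≠ 0) (hθ : |θ| ≤ π) : circleMap 0 1 θ ≠ 1 := by
  have hpos : 0 < |θ| / π := by positivity
  have hle := abs_div_pi_le_norm_one_sub_circleMap zero_le_one le_rfl hθ
  exact (sub_ne_zero.mp (norm_pos_iff.mp (hpos.trans_le hle))).symm

lemma intervalIntegrable_abs_rpow {p : ℝ} (hp : -1 < p) {a b : ℝ} :
    IntervalIntegrable (fun x => |x| ^ p) volume a b := by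
  refine intervalIntegrable_of_even (fun x => by rw [abs_neg]) fun x hx => ?_
  refine (intervalIntegral.intervalIntegrable_rpow' hp).congr fun y hy => ?_
  rw [Set.uIoc_of_le hx.le] at hy
  simp only [abs_of_pos hy.1]

lemma differentiableAt_one_sub_cpow {z : ℂ} (hz : 1 - z ∈ slitPlane) (c : ℂ) :
    DifferentiableAt ℂ (fun z => (1 - z) ^ c) z :=
  (differentiableAt_id.const_sub 1).cpow_const hz

end UnitDisc

/-- The generating function of the sequence `n ↦ F_{α,β}(λ, a + 1 + n, a)`, which does not depend
on `a`; see `coeff_discMLGenFun`. The powers are principal branches. -/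
noncomputable def discMLGenFun (α β lam : ℝ) (z : ℂ) : ℂ :=
  (1 - z) ^ ((α - β : ℝ) : ℂ) / ((1 - z) ^ (α : ℂ) - lam)

section GeneratingFunction

variable {α β lam : ℝ}

lemma differentiableAt_discMLGenFun {z : ℂ} (hz : 1 - z ∈ slitPlane)
    (hroot : (1 - z) ^ (α : ℂ) ≠ lam) : DifferentiableAt ℂ (discMLGenFun α β lam) z :=
  (differentiableAt_one_sub_cpow hz _).div ((differentiableAt_one_sub_cpow hz _).sub_const _)
    (sub_ne_zero.mpr hroot)

lemma exists_norm_discMLGenFun_le (hα : 0 < α)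
    (hroot : ∀ z : ℂ, ‖z‖ ≤ 1 → (1 - z) ^ (α : ℂ) ≠ lam) :
    ∃ C, 0 ≤ C ∧ ∀ β z, ‖z‖ ≤ 1 → ‖discMLGenFun α β lam z‖ ≤ C * ‖1 - z‖ ^ (α - β) := by
  have hcont : ContinuousOn (fun z : ℂ => ((1 - z) ^ (α : ℂ) - lam)⁻¹) (closedBall 0 1) := by
    intro z hz
    rw [mem_closedBall_zero_iff] at hz
    have hre : 0 ≤ (1 - z).re := by
      rw [sub_re, one_re, sub_nonneg]
      exact (re_le_norm z).trans hz
    have hpow := (continuousAt_cpow_const_of_re_pos (w := α) (Or.inl hre) (by simpa)).comp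
      (continuousAt_const.sub continuousAt_id)
    exact ((hpow.sub continuousAt_const).inv₀
      (sub_ne_zero.mpr (hroot z hz))).continuousWithinAt
  obtain ⟨C, hC⟩ := (isCompact_closedBall (0 : ℂ) 1).exists_bound_of_continuousOn hcont
  refine ⟨C, (norm_nonneg _).trans (hC 0 (by simp)), fun β z hz => ?_⟩
  rw [discMLGenFun, div_eq_inv_mul, norm_mul, norm_cpow_real]
  gcongr
  exact hC z (mem_closedBall_zero_iff.mpr hz)

lemma tendsto_discMLGenFun_circleMap {θ : ℝ} (hθ0 : θ ≠ 0) (hθ : |θ| ≤ π)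
    (hroot : (1 - circleMap 0 1 θ) ^ (α : ℂ) ≠ lam) :
    Tendsto (fun r => discMLGenFun α β lam (circleMap 0 r θ)) (𝓝[<] 1)
      (𝓝 (discMLGenFun α β lam (circleMap 0 1 θ))) := by
  have hre : 0 < (1 - circleMap 0 1 θ).re :=
    one_sub_re_pos (by simp) (circleMap_zero_one_ne_one hθ0 hθ)
  have hcircle : Continuous fun r : ℝ => circleMap 0 r θ := by
    unfold circleMap
    fun_prop
  exact ((differentiableAt_discMLGenFun (Or.inl hre) hroot).continuousAt.tendsto.comp
    (hcircle.tendsto 1)).mono_left nhdsWithin_le_nhds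

lemma hasFPowerSeriesAt_one_sub_cpow_neg (s : ℂ) :
    HasFPowerSeriesAt (fun z => (1 - z) ^ (-s))
      (FormalMultilinearSeries.ofScalars ℂ fun n : ℕ => Ring.choose (s + n - 1) n) 0 := by
  have h := (one_div_one_sub_cpow_hasFPowerSeriesOnBall_zero s).hasFPowerSeriesAt
  simpa only [one_div, ← cpow_neg] using h

lemma pow_mul_one_sub_cpow_eq {z : ℂ} (hz : z ≠ 1) (j : ℕ) :
    (lam : ℂ) ^ j * (1 - z) ^ (-((j * α + β : ℝ) : ℂ)) =
      (1 - z) ^ (-β : ℂ) * (lam * (1 - z) ^ (-α : ℂ)) ^ j := by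
  have hw : 1 - z ≠ 0 := sub_ne_zero.mpr hz.symm
  rw [mul_pow, ← cpow_nat_mul, mul_left_comm, ← cpow_add _ _ hw]
  push_cast
  ring_nf

lemma hasSum_discMLGenFun {z : ℂ} (hz : z ≠ 1) (hq : ‖lam * (1 - z) ^ (-α : ℂ)‖ < 1) :
    HasSum (fun j : ℕ => (lam : ℂ) ^ j * (1 - z) ^ (-((j * α + β : ℝ) : ℂ)))
      (discMLGenFun α β lam z) := by
  have hw : 1 - z ≠ 0 := sub_ne_zero.mpr hz.symm
  have hwα : (1 - z) ^ (α : ℂ) ≠ 0 := by simp [cpow_eq_zero_iff, hw]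
  have hclosed : discMLGenFun α β lam z =
      (1 - z) ^ (-β : ℂ) * (1 - lam * (1 - z) ^ (-α : ℂ))⁻¹ := by
    rw [discMLGenFun, ofReal_sub, sub_eq_neg_add (α : ℂ), cpow_add _ _ hw, cpow_neg _ (α : ℂ),
      ← mul_div_mul_right _ ((1 - z) ^ (α : ℂ) - lam) (inv_ne_zero hwα), sub_mul,
      mul_inv_cancel_right₀ hwα, mul_inv_cancel₀ hwα, div_eq_mul_inv]
  simp only [pow_mul_one_sub_cpow_eq hz, hclosed]
  exact (hasSum_geometric_of_norm_lt_one hq).mul_left _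

lemma hasSum_coeff_discMLGenFun (hlam : |lam| < 1) {p : FormalMultilinearSeries ℂ ℂ ℂ}
    (hp : HasFPowerSeriesAt (discMLGenFun α β lam) p 0) (n : ℕ) :
    HasSum (fun j : ℕ => (lam : ℂ) ^ j * Ring.choose (((j * α + β : ℝ) : ℂ) + n - 1) n)
      (p.coeff n) := by
  obtain ⟨q, hlamq, hq1⟩ := exists_between hlam
  have hcont (c : ℂ) : ContinuousAt (fun z : ℂ => (1 - z) ^ c) 0 :=
    (differentiableAt_one_sub_cpow (by simp) c).continuousAt
  have hratio : ∀ᶠ z : ℂ in 𝓝 0, ‖lam * (1 - z) ^ (-α : ℂ)‖ < q :=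
    ((hcont _).const_mul _).norm.eventually_lt_const (by simpa)
  have hfactor : ∀ᶠ z : ℂ in 𝓝 0, ‖(1 - z) ^ (-β : ℂ)‖ < 2 :=
    (hcont _).norm.eventually_lt_const (by simp)
  have hball : ∀ᶠ z : ℂ in 𝓝 0, ‖z‖ ≤ 1 ∧ z ≠ 1 := by
    filter_upwards [ball_mem_nhds (0 : ℂ) one_pos] with z hz
    rw [mem_ball_zero_iff] at hz
    exact ⟨hz.le, by rintro rfl; simp at hz⟩
  have hdiff : ∀ᶠ z : ℂ in 𝓝 0, ∀ j : ℕ,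
      DifferentiableAt ℂ (fun z => (lam : ℂ) ^ j * (1 - z) ^ (-((j * α + β : ℝ) : ℂ))) z := by
    filter_upwards [hball] with z hz j
    exact (differentiableAt_one_sub_cpow (Or.inl (one_sub_re_pos hz.1 hz.2)) _).const_mul _
  have hdom : ∀ᶠ z : ℂ in 𝓝 0, ∀ j : ℕ,
      ‖(lam : ℂ) ^ j * (1 - z) ^ (-((j * α + β : ℝ) : ℂ))‖ ≤ 2 * q ^ j := by
    filter_upwards [hratio, hfactor, hball] with z hzq hz2 hz j
    rw [pow_mul_one_sub_cpow_eq hz.2, norm_mul, norm_pow]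
    gcongr
  have hseries : ∀ᶠ z : ℂ in 𝓝 0, HasSum
      (fun j : ℕ => (lam : ℂ) ^ j * (1 - z) ^ (-((j * α + β : ℝ) : ℂ)))
      (discMLGenFun α β lam z) := by
    filter_upwards [hratio, hball] with z hzq hz using hasSum_discMLGenFun hz.2 (hzq.trans hq1)
  have hsum := hasSum_coeff
    ((summable_geometric_of_lt_one ((abs_nonneg _).trans hlamq.le) hq1).mul_left 2)
    hdiff hdom hseries
    (fun j => (hasFPowerSeriesAt_one_sub_cpow_neg _).const_smul (c := (lam : ℂ) ^ j)) hp n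
  simpa only [coeff_const_smul, FormalMultilinearSeries.coeff_ofScalars, smul_eq_mul] using hsum

lemma rise_div_Gamma_eq_choose {s : ℝ} (hs : ∀ k : ℕ, s ≠ -k) (n : ℕ) :
    rise (n + 1) (s - 1) / Real.Gamma s = Ring.choose (s + n - 1) n := by
  have hGamma : Real.Gamma (s + n) / Real.Gamma s = (ascPochhammer ℝ n).eval s := by
    have h := Gamma_add_nat_div_Gamma_eq (n := n) (s : ℂ) fun k => by exact_mod_cast hs k
    have hcast : (ascPochhammer ℂ n).eval (s : ℂ) = ((ascPochhammer ℝ n).eval s : ℝ) := by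
      rw [← ascPochhammer_map ofRealHom, ← ofRealHom_eq_coe, Polynomial.eval_map_apply,
        ofRealHom_eq_coe]
    rw [hcast, ← ofReal_natCast, ← ofReal_add, Gamma_ofReal, Gamma_ofReal] at h
    exact_mod_cast h
  have hchoose : Ring.choose (s + n - 1) n = (n.factorial : ℝ)⁻¹ * (ascPochhammer ℝ n).eval s := by
    rw [Ring.choose_eq_smul, Polynomial.descPochhammer_smeval_eq_ascPochhammer,
      Polynomial.ascPochhammer_smeval_cast, Polynomial.ascPochhammer_smeval_eq_eval, smul_eq_mul]
    ring_nf
  rw [hchoose, ← hGamma, rise]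
  push_cast
  rw [Real.Gamma_nat_eq_factorial, add_add_sub_cancel, add_comm, div_right_comm, inv_mul_eq_div]

lemma coeff_discMLGenFun (a : ℤ) (hα : 0 < α) (hβ : 0 < β) (hlam : |lam| < 1)
    {p : FormalMultilinearSeries ℂ ℂ ℂ} (hp : HasFPowerSeriesAt (discMLGenFun α β lam) p 0)
    (n : ℕ) : p.coeff n = (discML α β lam (a + 1 + n) a : ℝ) := by
  rw [← (hasSum_coeff_discMLGenFun hlam hp n).tsum_eq, discML, ofReal_tsum]
  refine tsum_congr fun j => ?_
  have hs : 0 < j * α + β := by positivity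
  rw [mul_div_assoc, show a + 1 + n - a = (n : ℤ) + 1 by ring, rise_div_Gamma_eq_choose fun k =>
    (hs.trans_le' (neg_nonpos.mpr k.cast_nonneg)).ne']
  push_cast
  rfl

end GeneratingFunction

lemma tendsto_discML_of_forall_cpow_ne (a : ℤ) {α β lam : ℝ} (hα : 0 < α) (hβ : 0 < β)
    (hβα : β < α + 1) (hlam : |lam| < 1) (hroot : ∀ z : ℂ, ‖z‖ ≤ 1 → (1 - z) ^ (α : ℂ) ≠ lam) :
    Tendsto (fun k : ℕ => discML α β lam (a + 1 + k) a) atTop (𝓝 0) := by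
  obtain ⟨C, hC0, hC⟩ := exists_norm_discMLGenFun_le hα hroot
  have hdiff : DifferentiableOn ℂ (discMLGenFun α β lam) (ball 0 1) := by
    intro z hz
    rw [mem_ball_zero_iff] at hz
    have hre : 0 < (1 - z).re := one_sub_re_pos hz.le (by rintro rfl; simp at hz)
    exact (differentiableAt_discMLGenFun (Or.inl hre) (hroot z hz.le)).differentiableWithinAt
  obtain ⟨p, hp⟩ := hdiff.analyticAt (ball_mem_nhds (0 : ℂ) one_pos)
  have habs {θ : ℝ} (hθ : θ ∈ Set.uIoc (-π) π) : |θ| ≤ π := by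
    rw [Set.uIoc_of_le (neg_lt_self Real.pi_pos).le] at hθ
    exact abs_le.mpr ⟨hθ.1.le, hθ.2⟩
  have hbound : IntervalIntegrable (fun θ => C * ((|θ| / π) ^ (α - β) + 2 ^ (α - β))) volume
      (-π) π := by
    simp only [Real.div_rpow (abs_nonneg _) Real.pi_pos.le]
    exact (((intervalIntegrable_abs_rpow (by linarith)).div_const _).add
      intervalIntegrable_const).const_mul C
  have hdom : ∀ r ∈ Set.Ioo (0 : ℝ) 1, ∀ᵐ θ, θ ∈ Set.uIoc (-π) π →
      ‖discMLGenFun α β lam (circleMap 0 r θ)‖ ≤ C * ((|θ| / π) ^ (α - β) + 2 ^ (α - β)) := by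
    intro r hr
    filter_upwards [Measure.ae_ne volume 0] with θ hθ0 hθ
    have hnorm : ‖circleMap 0 r θ‖ ≤ 1 := by
      rw [norm_circleMap_zero, abs_of_pos hr.1]
      exact hr.2.le
    refine (hC β _ hnorm).trans ?_
    gcongr
    exact norm_one_sub_circleMap_rpow_le hr.1.le hr.2.le hθ0 (habs hθ) _
  have hradial : ∀ᵐ θ, θ ∈ Set.uIoc (-π) π →
      Tendsto (fun r => discMLGenFun α β lam (circleMap 0 r θ)) (𝓝[<] 1)
        (𝓝 (discMLGenFun α β lam (circleMap 0 1 θ))) := by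
    filter_upwards [Measure.ae_ne volume 0] with θ hθ0 hθ
    exact tendsto_discMLGenFun_circleMap hθ0 (habs hθ) (hroot _ (by simp))
  have hcoeff := tendsto_coeff_of_dominated_boundary one_pos hdiff hp hbound hdom hradial
  simp only [ofReal_one, one_pow, one_smul, coeff_discMLGenFun a hα hβ hlam hp] at hcoeff
  exact tendsto_ofReal_iff.mp hcoeff

lemma discML_convergent_order_in_one_two_general (a : ℤ) {α β lam : ℝ} (hα0 : 0 < α) (hα2 : α ≤ 2)
    (hβ : 0 < β) (hβα : β < α + 1) (hlam1 : -1 < lam) (hlam0 : lam < 0) :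
    Tendsto (fun k : ℕ => discML α β lam (a + 1 + k) a) atTop (𝓝 0) :=
  tendsto_discML_of_forall_cpow_ne a hα0 hβ hβα (abs_lt.mpr ⟨hlam1, hlam0.trans one_pos⟩)
    fun _ => one_sub_cpow_ne_of_neg hα0 hα2 hlam0

/-- for `1 < α ≤ 2` and `-1 < λ < 0`, both `F_{α,1}(λ,k,a) → 0` and
`F_{α,2}(λ,k,a) → 0` as `k → ∞`; hence the zero-input response
`y(k) = b₀ F_{α,1}(λ,k,a) + b₁ F_{α,2}(λ,k,a)` converges to `0` for any `b₀, b₁`. -/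
theorem discML_convergent_order_in_one_two (a : ℤ) (α : ℝ) (hα0 : 1 < α) (hα1 : α ≤ 2)
    (lam : ℝ) (hlam0 : -1 < lam) (hlam1 : lam < 0) :
    Filter.Tendsto (fun k : ℕ => discML α 1 lam (a + 1 + k) a) Filter.atTop (nhds 0) ∧
    Filter.Tendsto (fun k : ℕ => discML α 2 lam (a + 1 + k) a) Filter.atTop (nhds 0) ∧
    ∀ b₀ b₁ : ℝ,
      Filter.Tendsto
        (fun k : ℕ => b₀ * discML α 1 lam (a + 1 + k) a + b₁ * discML α 2 lam (a + 1 + k) a)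
        Filter.atTop (nhds 0) := by
  have h1 := discML_convergent_order_in_one_two_general a (by linarith) hα1 one_pos (by linarith)
    hlam0 hlam1
  have h2 := discML_convergent_order_in_one_two_general a (by linarith) hα1 two_pos (by linarith)
    hlam0 hlam1
  exact ⟨h1, h2, fun b₀ b₁ => by simpa using (h1.const_mul b₀).add (h2.const_mul b₁)⟩
end

section
/- Let a ∈ ℤ, α > 0, and let λ be a real number with 0 < λ < 1. Then the discrete Mittag–Leffler function diverges as k → ∞: F_{α,1}(λ,k,a) → +∞ as k → ∞ (k ranging over ℕ_{a+1}). -/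
open Filter Asymptotics Finset

lemma one_add_sum_le_prod_one_add {ι R : Type*} [CommSemiring R] [PartialOrder R]
    [IsOrderedRing R] {s : Finset ι} {f : ι → R} (hf : ∀ i ∈ s, 0 ≤ f i) :
    1 + ∑ i ∈ s, f i ≤ ∏ i ∈ s, (1 + f i) := by
  induction s using Finset.cons_induction with
  | empty => simp
  | cons i s hi ih =>
    obtain ⟨hfi, hfs⟩ := (forall_mem_cons hi _).1 hf
    rw [sum_cons, prod_cons]
    calc 1 + (f i + ∑ j ∈ s, f j)
        ≤ 1 + (f i + ∑ j ∈ s, f j) + f i * ∑ j ∈ s, f j :=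
          le_add_of_nonneg_right (mul_nonneg hfi (sum_nonneg hfs))
      _ = (1 + f i) * (1 + ∑ j ∈ s, f j) := by ring
      _ ≤ (1 + f i) * ∏ j ∈ s, (1 + f j) :=
          mul_le_mul_of_nonneg_left (ih hfs) (add_nonneg zero_le_one hfi)

lemma tendsto_prod_range_add_div_succ_atTop {y : ℝ} (hy : 1 < y) :
    Tendsto (fun n : ℕ => ∏ i ∈ range n, (y + i) / (i + 1)) atTop atTop := by
  have hy' : 0 < y - 1 := sub_pos.2 hy
  refine tendsto_atTop_mono (fun n => ?_)
    (Real.tendsto_sum_range_one_div_nat_succ_atTop.const_mul_atTop hy')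
  calc (y - 1) * ∑ i ∈ range n, 1 / ((i : ℝ) + 1)
      = ∑ i ∈ range n, (y - 1) / ((i : ℝ) + 1) := by simp only [mul_sum, mul_one_div]
    _ ≤ 1 + ∑ i ∈ range n, (y - 1) / ((i : ℝ) + 1) := le_add_of_nonneg_left zero_le_one
    _ ≤ ∏ i ∈ range n, (1 + (y - 1) / ((i : ℝ) + 1)) :=
        one_add_sum_le_prod_one_add fun i _ => by positivity
    _ = ∏ i ∈ range n, (y + i) / (i + 1) := prod_congr rfl fun i _ => by field_simp; ring

lemma isBigO_affine_natCast {𝕜 : Type*} [RCLike 𝕜] (c d : 𝕜) :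
    (fun j : ℕ => c * j + d) =O[atTop] fun j : ℕ => (j : 𝕜) := by
  have hd : (fun _ : ℕ => d) =o[atTop] fun j : ℕ => (j : 𝕜) :=
    isLittleO_const_left.2 <| .inr <| by
      simpa only [Function.comp_def, RCLike.norm_natCast] using tendsto_natCast_atTop_atTop
  exact ((isBigO_refl _ _).const_mul_left c).add hd.isBigO

lemma summable_prod_affine_mul_geometric {ι 𝕜 : Type*} [RCLike 𝕜] (s : Finset ι) (c d : ι → 𝕜)
    {r : 𝕜} (hr : ‖r‖ < 1) : Summable fun j : ℕ => (∏ i ∈ s, (c i * j + d i)) * r ^ j := by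
  have hprod : (fun j : ℕ => ∏ i ∈ s, (c i * j + d i)) =O[atTop]
      fun j : ℕ => ((j ^ #s : ℕ) : 𝕜) := by
    simpa only [prod_const, Nat.cast_pow] using
      IsBigO.finsetProd fun i (_ : i ∈ s) => isBigO_affine_natCast (c i) (d i)
  exact (summable_norm_mul_geometric_of_norm_lt_one' hr hprod).of_norm

lemma rise_sub_one_div_Gamma (n : ℕ) {y : ℝ} (hy : ∀ m : ℕ, y ≠ -m) :
    rise (n + 1) (y - 1) / Real.Gamma y = ∏ i ∈ range n, (y + i) / (i + 1) := by
  have hΓ : Real.Gamma y ≠ 0 := Real.Gamma_ne_zero hy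
  have rise_eq (m : ℕ) : rise (m + 1) (y - 1) = Real.Gamma (y + m) / m.factorial := by
    rw [rise]
    push_cast
    rw [Real.Gamma_nat_eq_factorial, show (m : ℝ) + 1 + (y - 1) = y + m by ring]
  rw [rise_eq]
  induction n with
  | zero => simp [hΓ]
  | succ n ih =>
    have hyn : y + n ≠ 0 := fun h => hy n (eq_neg_of_add_eq_zero_left h)
    rw [prod_range_succ, ← ih, Nat.cast_succ, ← add_assoc, Real.Gamma_add_one hyn,
      Nat.factorial_succ]
    push_cast
    field_simp

lemma discML_eq_tsum_prod {α β : ℝ} (hα : 0 ≤ α) (hβ : 0 < β) (lam : ℝ) (a : ℤ) (n : ℕ) :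
    discML α β lam (a + 1 + n) a =
      ∑' j : ℕ, lam ^ j * ∏ i ∈ range n, (j * α + β + i) / (i + 1) := by
  refine tsum_congr fun j => ?_
  have hy (m : ℕ) : j * α + β ≠ -m := by
    have : 0 < j * α + β + m := by positivity
    linarith
  rw [← rise_sub_one_div_Gamma n hy, mul_div_assoc, show a + 1 + (n : ℤ) - a = n + 1 by ring]

lemma summable_geometric_mul_prod_add_div_succ (α β : ℝ) {lam : ℝ} (hlam : |lam| < 1) (n : ℕ) :
    Summable fun j : ℕ => lam ^ j * ∏ i ∈ range n, (j * α + β + i) / (i + 1) := by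
  refine (summable_prod_affine_mul_geometric (range n) (fun i => α / (i + 1))
    (fun i => (β + i) / (i + 1)) hlam).congr fun j => ?_
  rw [mul_comm]
  congr 1
  exact prod_congr rfl fun i _ => by ring

lemma geometric_mul_prod_le_discML {α β lam : ℝ} (hα : 0 ≤ α) (hβ : 0 < β) (hlam0 : 0 ≤ lam)
    (hlam1 : lam < 1) (a : ℤ) (n j : ℕ) :
    lam ^ j * ∏ i ∈ range n, (j * α + β + i) / (i + 1) ≤ discML α β lam (a + 1 + n) a := by
  rw [discML_eq_tsum_prod hα hβ]
  have hsum := summable_geometric_mul_prod_add_div_succ α β (abs_lt.2 ⟨by linarith, hlam1⟩) n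
  exact hsum.le_tsum j fun _ _ => by positivity

theorem discML_divergent_general (a : ℤ) {α β lam : ℝ} (hα : 0 < α) (hβ : 0 < β)
    (hlam0 : 0 < lam) (hlam1 : lam < 1) :
    Tendsto (fun k : ℕ => discML α β lam (a + 1 + k) a) atTop atTop := by
  obtain ⟨j, hj⟩ : ∃ j : ℕ, 1 < j * α + β := by
    obtain ⟨j, hj⟩ := exists_nat_gt (1 / α)
    exact ⟨j, by linarith [(div_lt_iff₀ hα).1 hj]⟩
  exact tendsto_atTop_mono (geometric_mul_prod_le_discML hα.le hβ hlam0.le hlam1 a · j)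
    ((tendsto_prod_range_add_div_succ_atTop hj).const_mul_atTop (pow_pos hlam0 j))

/-- for `α > 0` and `0 < λ < 1`, the discrete Mittag–Leffler
function diverges: `F_{α,1}(λ,k,a) → +∞` as `k → ∞` over `ℕ_{a+1}`. -/
theorem discML_divergent (a : ℤ) (α : ℝ) (hα : 0 < α)
    (lam : ℝ) (hlam0 : 0 < lam) (hlam1 : lam < 1) :
    Filter.Tendsto (fun k : ℕ => discML α 1 lam (a + 1 + k) a)
      Filter.atTop Filter.atTop :=
  discML_divergent_general a hα one_pos hlam0 hlam1
end
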